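/- arXiv:2412.00389 — 4 statements merged into one kernel-verified Lean document; each statement's English description precedes it below -/
import Mathlib

section
/- There exists an absolute constant c > 0 with the following property. Let N, M be positive integers and let a_1, ..., a_N be positive integers (not necessarily distinct) with a_n ≤ M for all 1 ≤ n ≤ N. For d ∈ ℕ set ω(d) = #{n ≤ N : d divides a_n}. Let α ∈ (0,1], let y = max((ln M)^α, 2), and let 𝒟 be the collection of squarefree positive integers all of whose prime divisors lie in (1, y] (with 1 ∈ 𝒟). Suppose K > 0 is a constant and g is a multiplicative arithmetic function with g(n) > 0 for n ∈ 𝒟 such that ω(n) ≤ K/g(n) for every n ∈ 𝒟. Then for every s ∈ ℕ, Σ_{n=1}^{N} (a_n/φ(a_n))^s ≤ K · (c/α)^s · Π_{p ≤ y} (1 + ((1+p^{-1})^s − 1)/g(p)), where the product runs over primes p ≤ y. -/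
open Finset in
lemma aux_log_sum (n : ℕ) (hn : 2 ≤ n) :
    ∑ p ∈ (range (n+1)).filter Nat.Prime, Real.log p / p ≤ 2 * Real.log n := by
  have h1 : ∑ p ∈ (range (n+1)).filter Nat.Prime, Real.log p * ((n / p : ℕ) : ℝ)
      ≤ n * Real.log n := by
    have e1 : ∀ p ∈ (range (n+1)).filter Nat.Prime, Real.log p * ((n / p : ℕ) : ℝ)
        = ∑ k ∈ range n, if p ∣ k + 1 then Real.log p else 0 := by
      intro p hp
      rw [← Nat.card_multiples, ← sum_filter, sum_const, nsmul_eq_mul, mul_comm]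
    rw [sum_congr rfl e1, sum_comm]
    have e2 : ∀ k ∈ range n, (∑ p ∈ (range (n+1)).filter Nat.Prime,
        if p ∣ k + 1 then Real.log p else 0) ≤ Real.log n := by
      intro k hk
      rw [← sum_filter]
      have hk' := mem_range.1 hk
      have : ((range (n+1)).filter Nat.Prime).filter (fun p => p ∣ k + 1) ⊆ (k+1).primeFactors := by
        intro p hp
        simp only [mem_filter] at hp
        exact Nat.mem_primeFactors.2 ⟨hp.1.2, hp.2, by omega⟩
      refine (sum_le_sum_of_subset_of_nonneg this (fun p _ _ => Real.log_natCast_nonneg p)).trans ?_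
      rw [← Real.log_prod (fun p hp => by
        have := (Nat.prime_of_mem_primeFactors hp).pos
        positivity)]
      have h3 : (∏ p ∈ (k+1).primeFactors, (p:ℝ)) ≤ n := by
        have := Nat.le_of_dvd (by omega) (Nat.prod_primeFactors_dvd (k+1))
        have h4 : (∏ p ∈ (k+1).primeFactors, p) ≤ n := by omega
        have h5 : ((∏ p ∈ (k+1).primeFactors, p : ℕ):ℝ) ≤ n := by exact_mod_cast h4
        rwa [Nat.cast_prod] at h5
      apply Real.log_le_log _ h3
      exact prod_pos (fun p hp => by
        have := (Nat.prime_of_mem_primeFactors hp).pos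
        positivity)
    refine (sum_le_sum e2).trans ?_
    simp
  have h2 : ∑ p ∈ (range (n+1)).filter Nat.Prime, (n:ℝ) / 2 * (Real.log p / p) ≤
      ∑ p ∈ (range (n+1)).filter Nat.Prime, Real.log p * ((n / p : ℕ) : ℝ) := by
    apply sum_le_sum
    intro p hp
    simp only [mem_filter, mem_range] at hp
    have hp0 := hp.2.pos
    have h3 : n ≤ 2 * (p * (n / p)) := by
      have h4 := Nat.div_add_mod n p
      have h5 := Nat.mod_lt n hp0
      have h6 : 1 ≤ n / p := (Nat.one_le_div_iff hp0).2 (by omega)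
      have h7 : p * 1 ≤ p * (n/p) := Nat.mul_le_mul_left _ h6
      omega
    have h4 : (n:ℝ) ≤ 2 * (p * ((n / p : ℕ) : ℝ)) := by exact_mod_cast h3
    have hpR : (0:ℝ) < p := by exact_mod_cast hp0
    have hl : 0 ≤ Real.log p := Real.log_natCast_nonneg p
    rw [show (n:ℝ) / 2 * (Real.log p / p) = Real.log p * (n / 2 / p) by ring]
    apply mul_le_mul_of_nonneg_left _ hl
    rw [div_le_iff₀ hpR]
    linarith
  rw [← mul_sum] at h2
  have hnR : (0:ℝ) < n := by exact_mod_cast (by omega : 0 < n)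
  have := h2.trans h1
  have h3 : (n:ℝ) / 2 * ∑ p ∈ (range (n+1)).filter Nat.Prime, Real.log p / p ≤ n/2 * (2 * Real.log n) := by
    linarith
  exact le_of_mul_le_mul_left h3 (by positivity)

lemma aux_step (N : ℕ) (hN : 1 ≤ N) (t : ℝ) (ht : 0 < t) :
    t * ((N+1 : ℕ):ℝ) ^ (-(1+t)) ≤ (N:ℝ)^(-t) - ((N+1:ℕ):ℝ)^(-t) := by
  have hN0 : (0:ℝ) < N := by exact_mod_cast hN
  have hN1 : (0:ℝ) < ((N+1:ℕ):ℝ) := by positivity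
  have e1 : ((N+1:ℕ):ℝ) ^ (-(1+t)) = ((N+1:ℕ):ℝ)^(-t) * (((N+1:ℕ):ℝ))⁻¹ := by
    rw [← Real.rpow_neg_one, ← Real.rpow_add hN1]; ring_nf
  have e2 : (N:ℝ)^(-t) = ((N+1:ℕ):ℝ)^(-t) * (((N+1:ℕ):ℝ)/N)^t := by
    rw [Real.div_rpow hN1.le hN0.le, Real.rpow_neg hN0.le, Real.rpow_neg hN1.le]
    have : ((N+1:ℕ):ℝ)^t ≠ 0 := by positivity
    have : (N:ℝ)^t ≠ 0 := by positivity
    field_simp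
  have e3 : 1 + t * (((N+1:ℕ):ℝ))⁻¹ ≤ (((N+1:ℕ):ℝ)/N)^t := by
    have hq : 0 < ((N+1:ℕ):ℝ)/N := by positivity
    rw [Real.rpow_def_of_pos hq]
    have h1 := Real.one_sub_inv_le_log_of_pos hq
    have h2 : 1 - (((N+1:ℕ):ℝ)/N)⁻¹ = (((N+1:ℕ):ℝ))⁻¹ := by
      push_cast; field_simp; ring
    rw [h2] at h1
    have h3 := Real.add_one_le_exp (Real.log (((N+1:ℕ):ℝ)/N) * t)
    nlinarith
  rw [e1, e2]
  have : 0 < ((N+1:ℕ):ℝ)^(-t) := by positivity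
  nlinarith

lemma aux_zeta (t : ℝ) (ht : 0 < t) (N : ℕ) :
    ∑ k ∈ Finset.range (N+1), ((k+1:ℕ):ℝ)^(-(1+t)) ≤ 1 + (1 - ((N+1:ℕ):ℝ)^(-t)) / t := by
  induction N with
  | zero => simp
  | succ N ih =>
    rw [Finset.sum_range_succ]
    have := aux_step (N+1) (by omega) t ht
    have h2 : ((N+1+1:ℕ):ℝ)^(-(1+t)) ≤ (((N+1:ℕ):ℝ)^(-t) - ((N+1+1:ℕ):ℝ)^(-t))/t := by
      rw [le_div_iff₀ ht]; linarith
    have h3 : (1 - ((N+1+1:ℕ):ℝ)^(-t)) / t = (1 - ((N+1:ℕ):ℝ)^(-t)) / t +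
      (((N+1:ℕ):ℝ)^(-t) - ((N+1+1:ℕ):ℝ)^(-t))/t := by ring
    linarith

/-- the power function as a monoid hom -/
noncomputable def auxHom (σ : ℝ) : ℕ →* ℝ where
  toFun k := (k:ℝ)^(-σ)
  map_one' := by simp
  map_mul' a b := by
    push_cast
    exact Real.mul_rpow (Nat.cast_nonneg _) (Nat.cast_nonneg _)

lemma auxHom_lt (σ : ℝ) (hσ : 0 < σ) {p : ℕ} (hp : p.Prime) : ‖auxHom σ p‖ < 1 := by
  have h1 : (1:ℝ) < p := by exact_mod_cast hp.one_lt
  change ‖(p:ℝ)^(-σ)‖ < 1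
  rw [Real.norm_of_nonneg (by positivity)]
  exact Real.rpow_lt_one_of_one_lt_of_neg h1 (by linarith)

open Finset in
lemma aux_euler_upper (t : ℝ) (ht : 0 < t) (N : ℕ) :
    ∏ p ∈ (range N).filter Nat.Prime, (1 - (p:ℝ)^(-(1+t)))⁻¹ ≤ 1 + 1 / t := by
  have h := (EulerProduct.summable_and_hasSum_smoothNumbers_prod_primesBelow_geometric
    (f := auxHom (1+t)) (fun hp => auxHom_lt (1+t) (by linarith) hp) N).2
  change _ ≤ _
  have hb : ∀ s : Finset ℕ, ∑ k ∈ s, (k:ℝ)^(-(1+t)) ≤ 1 + 1/t := by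
    intro s
    obtain ⟨B, hB⟩ := s.exists_nat_subset_range
    have h1 : s ⊆ range (B+2) := hB.trans (by
      intro x; simp only [mem_range]; omega)
    refine (sum_le_sum_of_subset_of_nonneg h1 (fun i _ _ => by positivity)).trans ?_
    rw [sum_range_succ']
    have := aux_zeta t ht B
    have h0 : ((0:ℕ):ℝ)^(-(1+t)) = 0 := by
      rw [Nat.cast_zero, Real.zero_rpow (by linarith)]
    rw [h0]
    have h3 : (1 - ((B+1:ℕ):ℝ)^(-t)) / t ≤ 1 / t := by
      apply div_le_div_of_nonneg_right _ ht.le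
      have : 0 ≤ ((B+1:ℕ):ℝ)^(-t) := by positivity
      linarith
    linarith
  refine le_of_tendsto h (Filter.Eventually.of_forall fun s => ?_)
  have := hb (s.map (Function.Embedding.subtype _))
  rw [sum_map] at this
  exact this

open Finset in
lemma aux_euler_lower (N : ℕ) :
    Real.log ((N:ℝ)+1) ≤ ∏ p ∈ (range (N+1)).filter Nat.Prime, (1 - 1/(p:ℝ))⁻¹ := by
  have h := (EulerProduct.summable_and_hasSum_smoothNumbers_prod_primesBelow_geometric
    (f := auxHom 1) (fun hp => auxHom_lt 1 (by norm_num) hp) (N+1)).2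
  have e : ∏ p ∈ (range (N+1)).filter Nat.Prime, (1 - 1/(p:ℝ))⁻¹ =
      ∏ p ∈ (N+1).primesBelow, (1 - auxHom 1 p)⁻¹ := by
    refine prod_congr rfl (fun p _ => ?_)
    change _ = (1 - (p:ℝ)^(-1:ℝ))⁻¹
    rw [Real.rpow_neg_one, one_div]
  rw [e]
  have h1 := log_add_one_le_harmonic N
  push_cast at h1
  refine h1.trans ?_
  let F : Finset (N+1).smoothNumbers := (univ : Finset (Fin N)).map
    ⟨fun i => ⟨i.1+1, Nat.mem_smoothNumbers_of_lt (by omega) (by omega)⟩, by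
      intro a b hab
      simp only [Subtype.mk.injEq] at hab
      ext; omega⟩
  have h2 := sum_le_hasSum F (fun i _ => by
    change 0 ≤ ((i:ℕ):ℝ)^(-1:ℝ)
    positivity) h
  refine le_trans (le_of_eq ?_) h2
  rw [sum_map]
  rw [harmonic]
  push_cast
  rw [← Fin.sum_univ_eq_sum_range (fun i => ((i:ℝ)+1)⁻¹)]
  refine sum_congr rfl fun i _ => ?_
  change _ = ((i.1+1:ℕ):ℝ)^(-1:ℝ)
  rw [Real.rpow_neg_one]; push_cast; rfl

lemma aux_factor (p : ℕ) (hp : p.Prime) (t : ℝ) (ht : 0 < t) :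
    (1 - 1/(p:ℝ))⁻¹ ≤ (1 - (p:ℝ)^(-(1+t)))⁻¹ * Real.exp (2 * t * (Real.log p / p)) := by
  have h2 : (2:ℝ) ≤ p := by exact_mod_cast hp.two_le
  have hp0 : (0:ℝ) < p := by linarith
  have e1 : (p:ℝ)^(-(1+t)) = (1/p) * Real.exp (-(t * Real.log p)) := by
    rw [show -(1+t) = -1 + -t by ring, Real.rpow_add hp0, Real.rpow_neg_one,
      Real.rpow_def_of_pos hp0 (-t), one_div]
    ring_nf
  have h3 := Real.add_one_le_exp (-(t * Real.log p))
  set v := 1/(p:ℝ) with hv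
  have hv2 : v ≤ 1/2 := by rw [hv]; exact one_div_le_one_div_of_le (by norm_num) h2
  have hv0 : 0 < v := by positivity
  have hl : 0 ≤ Real.log p := Real.log_natCast_nonneg p
  have h4 : Real.exp (-(t * Real.log p)) ≤ 1 := Real.exp_le_one_iff.2 (by nlinarith [mul_nonneg ht.le hl])
  have hE := Real.exp_pos (-(t * Real.log p))
  have hw : 0 < 1 - (p:ℝ)^(-(1+t)) := by rw [e1]; nlinarith
  have hq : 0 < 1 - v := by linarith
  rw [inv_mul_eq_div, le_div_iff₀ hw, inv_mul_le_iff₀ hq, e1]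
  have h5 := Real.add_one_le_exp (2 * t * (Real.log p / p))
  have h6 : Real.log p / p = v * Real.log p := by rw [hv]; ring
  rw [h6] at h5 ⊢
  have hz : 0 ≤ v * (t * Real.log p) := by positivity
  set z := t * Real.log p
  have : 2 * t * (v * Real.log p) = 2 * (v * z) := by simp only [z]; ring
  rw [this] at h5 ⊢
  calc 1 - v * Real.exp (-z) ≤ 1 - v + v * z := by nlinarith
    _ ≤ (1 - v) * (2 * (v*z) + 1) := by nlinarith
    _ ≤ _ := by gcongr

open Finset in
lemma aux_mertens (n : ℕ) (hn : 2 ≤ n) :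
    ∏ p ∈ (range (n+1)).filter Nat.Prime, (1 - 1/(p:ℝ))⁻¹ ≤ Real.exp 4 * (1 + Real.log n) := by
  have hL : 0 < Real.log n := Real.log_pos (by exact_mod_cast (by omega : 1 < n))
  set t := 1 / Real.log n with ht
  have ht0 : 0 < t := by positivity
  have h1 : ∏ p ∈ (range (n+1)).filter Nat.Prime, (1 - 1/(p:ℝ))⁻¹ ≤
      ∏ p ∈ (range (n+1)).filter Nat.Prime,
        ((1 - (p:ℝ)^(-(1+t)))⁻¹ * Real.exp (2 * t * (Real.log p / p))) := by
    apply prod_le_prod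
    · intro p hp
      have : (1:ℝ) < p := by exact_mod_cast (mem_filter.1 hp).2.one_lt
      have : 1/(p:ℝ) < 1 := by rw [div_lt_one (by linarith)]; exact this
      exact inv_nonneg.2 (by linarith)
    · intro p hp
      exact aux_factor p (mem_filter.1 hp).2 t ht0
  rw [prod_mul_distrib, ← Real.exp_sum, ← mul_sum] at h1
  refine h1.trans ?_
  have h2 := aux_euler_upper t ht0 (n+1)
  have h3 : 2 * t * ∑ p ∈ (range (n+1)).filter Nat.Prime, Real.log p / p ≤ 4 := by
    calc _ ≤ 2 * t * (2 * Real.log n) := by gcongr; exact aux_log_sum n hn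
      _ = 4 := by rw [ht]; field_simp; norm_num
  have h4 : 1 / t = Real.log n := by rw [ht, one_div_one_div]
  rw [h4] at h2
  rw [mul_comm (Real.exp 4)]
  gcongr
open Finset in
lemma aux_prod_subset {s t : Finset ℕ} (h : s ⊆ t) (f : ℕ → ℝ) (hf : ∀ i ∈ t, 1 ≤ f i) :
    ∏ i ∈ s, f i ≤ ∏ i ∈ t, f i := by
  rw [← prod_sdiff h]
  have h0 : 0 ≤ ∏ i ∈ s, f i := prod_nonneg fun i hi => by linarith [hf i (h hi)]
  have h1 : 1 ≤ ∏ i ∈ t \ s, f i := by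
    have := prod_le_prod (s := t \ s) (f := fun _ => (1:ℝ)) (g := f) (fun _ _ => zero_le_one)
      (fun i hi => hf i (mem_sdiff.1 hi).1)
    simpa using this
  nlinarith

lemma aux_inv_ge (k : ℕ) (hk : 2 ≤ k) : 1 ≤ (1 - 1/(k:ℝ))⁻¹ := by
  have h2 : (2:ℝ) ≤ k := by exact_mod_cast hk
  have h1 : 1/(k:ℝ) ≤ 1/2 := one_div_le_one_div_of_le (by norm_num) h2
  have h0 : 0 < 1/(k:ℝ) := by positivity
  exact (one_le_inv₀ (by linarith)).2 (by linarith)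

open Finset in
lemma aux_telescope (m : ℕ) :
    ∏ k ∈ range m, (1 - 1/((k+2:ℕ):ℝ)^2)⁻¹ = 2 * ((m:ℝ)+1) / ((m:ℝ)+2) := by
  induction m with
  | zero => simp
  | succ m ih =>
    rw [prod_range_succ, ih]
    have : (1 - 1/((m+2:ℕ):ℝ)^2) = (m+1)*(m+3)/(m+2)^2 := by
      push_cast; field_simp; ring
    rw [this]
    push_cast
    field_simp
    ring

open Finset in
lemma aux_small (S : Finset ℕ) (hS : ∀ p ∈ S, 2 ≤ p) :
    ∏ p ∈ S, (1 - 1/(p:ℝ))⁻¹ ≤ 2 * ∏ p ∈ S, (1 + 1/(p:ℝ)) := by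
  have e : ∀ p ∈ S, (1 - 1/(p:ℝ))⁻¹ = (1 - 1/(p:ℝ)^2)⁻¹ * (1 + 1/(p:ℝ)) := by
    intro p hp
    have h2 : (2:ℝ) ≤ p := by exact_mod_cast hS p hp
    have h0 : (0:ℝ) < p := by linarith
    have : (1 - 1/(p:ℝ)^2) = (1 - 1/(p:ℝ)) * (1 + 1/p) := by ring
    rw [this, mul_inv, mul_assoc, inv_mul_cancel₀ (by positivity), mul_one]
  rw [prod_congr rfl e, prod_mul_distrib]
  apply mul_le_mul_of_nonneg_right _ (prod_nonneg fun p _ => by positivity)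
  obtain ⟨m, hm⟩ := S.exists_nat_subset_range
  have hsub : S ⊆ (range m).image (fun k => k + 2) := by
    intro p hp
    have h1 := mem_range.1 (hm hp)
    have h2 := hS p hp
    exact mem_image.2 ⟨p-2, mem_range.2 (by omega), by omega⟩
  refine (aux_prod_subset hsub (fun p => (1 - 1/(p:ℝ)^2)⁻¹) ?_).trans ?_
  · intro p hp
    obtain ⟨k, -, rfl⟩ := mem_image.1 hp
    have h2 : (2:ℝ) ≤ ((k+2:ℕ):ℝ) := by exact_mod_cast (by omega : 2 ≤ k+2)
    have h1 : 1/((k+2:ℕ):ℝ)^2 ≤ 1/2 := one_div_le_one_div_of_le (by norm_num) (by nlinarith)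
    have h0 : 0 < 1/((k+2:ℕ):ℝ)^2 := by positivity
    exact (one_le_inv₀ (by linarith)).2 (by linarith)
  · rw [prod_image (by intro a _ b _ h; simpa using h)]
    rw [aux_telescope m, div_le_iff₀ (by positivity)]
    linarith

open Finset in
lemma aux_phi (a : ℕ) (ha : 0 < a) :
    (a:ℝ) / (Nat.totient a : ℝ) = ∏ p ∈ a.primeFactors, (1 - 1/(p:ℝ))⁻¹ := by
  have h := Nat.totient_eq_mul_prod_factors a
  have h' : (Nat.totient a : ℝ) = a * ∏ p ∈ a.primeFactors, (1 - (p:ℝ)⁻¹) := by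
    have := congrArg (fun q : ℚ => (q:ℝ)) h
    push_cast at this
    exact this
  rw [h', prod_inv_distrib]
  have : (a:ℝ) ≠ 0 := by positivity
  simp only [one_div]
  rw [div_mul_cancel_left₀ this]

open Finset in
lemma aux_large (a M : ℕ) (ha : 0 < a) (haM : a ≤ M) (X : ℝ) (hX : 2 ≤ X) (hXM : Real.log M ≤ X) :
    ∏ p ∈ a.primeFactors.filter (fun p : ℕ => X < (p:ℝ)), (1 - 1/(p:ℝ))⁻¹ ≤ Real.exp (2 / Real.log 2) := by
  have hl2 : 0 < Real.log 2 := Real.log_pos (by norm_num)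
  have h1 : ∏ p ∈ a.primeFactors.filter (fun p : ℕ => X < (p:ℝ)), (1 - 1/(p:ℝ))⁻¹ ≤
      ∏ p ∈ a.primeFactors.filter (fun p : ℕ => X < (p:ℝ)), Real.exp (2/X) := by
    apply prod_le_prod
    · intro p hp
      linarith [aux_inv_ge p (Nat.prime_of_mem_primeFactors (mem_filter.1 hp).1).two_le]
    · intro p hp
      have hp2 := (Nat.prime_of_mem_primeFactors (mem_filter.1 hp).1).two_le
      have h2 : (2:ℝ) ≤ p := by exact_mod_cast hp2
      have hXp := (mem_filter.1 hp).2
      have hv : 1/(p:ℝ) ≤ 1/2 := one_div_le_one_div_of_le (by norm_num) h2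
      have hv0 : 0 < 1/(p:ℝ) := by positivity
      have hvX : 1/(p:ℝ) ≤ 1/X := one_div_le_one_div_of_le (by linarith) hXp.le
      have : (1 - 1/(p:ℝ))⁻¹ ≤ 1 + 2 * (1/p) := by
        rw [inv_le_iff_one_le_mul₀ (by linarith)]
        nlinarith
      have h3 := Real.add_one_le_exp (2/X)
      have h4 : 2 / X = 2 * (1/X) := by ring
      linarith
  refine h1.trans ?_
  rw [prod_const, ← Real.exp_nat_mul]
  apply Real.exp_le_exp.2
  set c := (a.primeFactors.filter (fun p : ℕ => X < (p:ℝ))).card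
  have hc : (c:ℝ) * Real.log 2 ≤ X := by
    have h5 : 2 ^ c ≤ a := by
      have h6 : 2 ^ c ≤ ∏ p ∈ a.primeFactors.filter (fun p : ℕ => X < (p:ℝ)), p :=
        pow_card_le_prod _ _ _ fun p hp =>
          (Nat.prime_of_mem_primeFactors (mem_filter.1 hp).1).two_le
      refine h6.trans (Nat.le_of_dvd ha ?_)
      exact (prod_dvd_prod_of_subset _ _ _ (filter_subset _ _)).trans (Nat.prod_primeFactors_dvd a)
    rw [← Real.log_pow]
    refine le_trans (Real.log_le_log (by positivity) ?_) hXM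
    exact_mod_cast h5.trans haM
  rw [le_div_iff₀ hl2]
  have hX0 : 0 < X := by linarith
  calc (c:ℝ) * (2/X) * Real.log 2 = (c * Real.log 2) * 2 / X := by ring
    _ ≤ 2 := by rw [div_le_iff₀ hX0]; linarith

open Finset in
lemma aux_mid (a : ℕ) (X y : ℝ) (hy : 2 ≤ y) (hyX : y ≤ X) :
    ∏ p ∈ a.primeFactors.filter (fun p : ℕ => y < (p:ℝ) ∧ (p:ℝ) ≤ X), (1 - 1/(p:ℝ))⁻¹ ≤
      Real.exp 4 * (1 + Real.log X) / Real.log y := by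
  have hly : 0 < Real.log y := Real.log_pos (by linarith)
  rw [le_div_iff₀ hly]
  have hlow := aux_euler_lower ⌊y⌋₊
  have h1 : Real.log y ≤ Real.log ((⌊y⌋₊:ℝ)+1) :=
    Real.log_le_log (by linarith) (Nat.lt_floor_add_one y).le
  have hX2 : 2 ≤ ⌊X⌋₊ := Nat.le_floor (by push_cast; linarith)
  have hup := aux_mertens ⌊X⌋₊ hX2
  have h2 : Real.log ⌊X⌋₊ ≤ Real.log X := by
    apply Real.log_le_log
    · exact_mod_cast (by omega : 0 < ⌊X⌋₊)
    · exact Nat.floor_le (by linarith)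
  set A := a.primeFactors.filter (fun p : ℕ => y < (p:ℝ) ∧ (p:ℝ) ≤ X)
  set B := (range (⌊y⌋₊+1)).filter Nat.Prime
  have hd : Disjoint A B := by
    rw [disjoint_left]
    intro p hp hq
    have h3 := (mem_filter.1 hp).2.1
    have h4 := mem_range.1 (mem_filter.1 hq).1
    have h5 := (Nat.le_floor_iff (by linarith : 0 ≤ y)).1 (by omega : p ≤ ⌊y⌋₊)
    linarith
  have hsub : A ∪ B ⊆ (range (⌊X⌋₊+1)).filter Nat.Prime := by
    intro p hp
    rcases mem_union.1 hp with h | h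
    · have h' := mem_filter.1 h
      refine mem_filter.2 ⟨mem_range.2 ?_, Nat.prime_of_mem_primeFactors h'.1⟩
      have := Nat.le_floor h'.2.2
      omega
    · have h' := mem_filter.1 h
      refine mem_filter.2 ⟨mem_range.2 ?_, h'.2⟩
      have := mem_range.1 h'.1
      have := Nat.floor_le_floor hyX
      omega
  have h3 := aux_prod_subset hsub (fun p => (1 - 1/(p:ℝ))⁻¹)
    (fun p hp => aux_inv_ge p (mem_filter.1 hp).2.two_le)
  rw [prod_union hd] at h3
  have hA : 0 ≤ ∏ p ∈ A, (1 - 1/(p:ℝ))⁻¹ := prod_nonneg fun p hp => by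
    linarith [aux_inv_ge p (Nat.prime_of_mem_primeFactors (mem_filter.1 hp).1).two_le]
  calc _ ≤ (∏ p ∈ A, (1 - 1/(p:ℝ))⁻¹) * ∏ p ∈ B, (1 - 1/(p:ℝ))⁻¹ :=
        mul_le_mul_of_nonneg_left (h1.trans hlow) hA
    _ ≤ _ := h3.trans (hup.trans (by gcongr))

open Finset in
lemma aux_ratio (a M : ℕ) (ha : 0 < a) (haM : a ≤ M) (α : ℝ) (hα : α ∈ Set.Ioc (0:ℝ) 1)
    (y : ℝ) (hy : y = max (Real.log M ^ α) 2) :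
    (a:ℝ) / (Nat.totient a : ℝ) ≤ (6 * Real.exp 4 * Real.exp (2 / Real.log 2)) / α *
      ∏ p ∈ ((range (⌊y⌋₊+1)).filter Nat.Prime).filter (fun p => p ∣ a), (1 + 1/(p:ℝ)) := by
  obtain ⟨hα0, hα1⟩ := hα
  have hy2 : 2 ≤ y := hy ▸ le_max_right _ _
  set X := max (Real.log M) 2 with hXd
  have hX2 : 2 ≤ X := le_max_right _ _
  have hl2 : 1/2 < Real.log 2 := by linarith [Real.log_two_gt_d9]
  have hyX : y ≤ X := by
    rw [hy]
    apply max_le _ hX2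
    rcases le_total (Real.log M) 1 with h | h
    · have h0 : 0 ≤ Real.log M := Real.log_natCast_nonneg M
      have := Real.rpow_le_one h0 h hα0.le
      linarith
    · have := Real.rpow_le_rpow_of_exponent_le h hα1
      rw [Real.rpow_one] at this
      exact this.trans (le_max_left _ _)
  have hly : Real.log 2 ≤ Real.log y := Real.log_le_log (by norm_num) hy2
  have hlX : Real.log 2 ≤ Real.log X := Real.log_le_log (by norm_num) hX2
  have hXy : α * Real.log X ≤ Real.log y := by
    rcases le_total (Real.log M) 2 with h | h
    · have : X = 2 := max_eq_right h
      rw [this] at *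
      nlinarith
    · have : X = Real.log M := max_eq_left h
      rw [this, ← Real.log_rpow (by linarith)]
      apply Real.log_le_log
      · have : 0 < Real.log M := by linarith
        positivity
      · rw [hy]; exact le_max_left _ _
  have hmid : Real.exp 4 * (1 + Real.log X) / Real.log y ≤ 3 * Real.exp 4 / α := by
    rw [div_le_div_iff₀ (by linarith) hα0]
    have := Real.exp_pos 4
    have h1 : (1 + Real.log X) * α ≤ 3 * Real.log y := by nlinarith
    nlinarith
  rw [aux_phi a ha]
  set f : ℕ → ℝ := fun p => (1 - 1/(p:ℝ))⁻¹ with hf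
  set S := ((range (⌊y⌋₊+1)).filter Nat.Prime).filter (fun p => p ∣ a) with hS
  have hsplit : ∏ p ∈ a.primeFactors, f p = (∏ p ∈ S, f p) *
      (∏ p ∈ a.primeFactors.filter (fun p : ℕ => y < (p:ℝ) ∧ (p:ℝ) ≤ X), f p) *
      ∏ p ∈ a.primeFactors.filter (fun p : ℕ => X < (p:ℝ)), f p := by
    have e1 : S = a.primeFactors.filter (fun p : ℕ => ¬ (y < (p:ℝ))) := by
      ext p
      simp only [hS, mem_filter, mem_range, Nat.mem_primeFactors, not_lt, Nat.lt_succ_iff]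
      rw [Nat.le_floor_iff (by linarith)]
      constructor
      · rintro ⟨⟨h1, h2⟩, h3⟩; exact ⟨⟨h2, h3, by omega⟩, h1⟩
      · rintro ⟨⟨h1, h2, _⟩, h3⟩; exact ⟨⟨h3, h1⟩, h2⟩
    rw [← prod_filter_mul_prod_filter_not a.primeFactors (fun p : ℕ => y < (p:ℝ)), ← e1,
      ← prod_filter_mul_prod_filter_not (a.primeFactors.filter (fun p : ℕ => y < (p:ℝ)))
        (fun p : ℕ => X < (p:ℝ)), filter_filter, filter_filter]
    have e2 : a.primeFactors.filter (fun p : ℕ => y < (p:ℝ) ∧ X < (p:ℝ)) =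
        a.primeFactors.filter (fun p : ℕ => X < (p:ℝ)) :=
      filter_congr fun p _ => ⟨fun h => h.2, fun h => ⟨by linarith, h⟩⟩
    rw [e2]
    simp only [not_lt]
    ring
  rw [hsplit]
  have hp : ∀ T : Finset ℕ, (∀ p ∈ T, 2 ≤ p) → 0 ≤ ∏ p ∈ T, f p := fun T hT =>
    prod_nonneg fun p hp => by linarith [aux_inv_ge p (hT p hp)]
  have hpf : ∀ p ∈ a.primeFactors, 2 ≤ p := fun p hp => (Nat.prime_of_mem_primeFactors hp).two_le
  have hS2 : ∀ p ∈ S, 2 ≤ p := fun p hp => (mem_filter.1 (mem_filter.1 hp).1).2.two_le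
  have b1 := aux_small S hS2
  have b2 := (aux_mid a X y hy2 hyX).trans hmid
  have b3 := aux_large a M ha haM X hX2 (le_max_left _ _)
  calc _ ≤ (2 * ∏ p ∈ S, (1 + 1/(p:ℝ))) * (3 * Real.exp 4 / α) * Real.exp (2 / Real.log 2) := by
        apply mul_le_mul _ b3 (hp _ fun p h => hpf p (mem_filter.1 h).1)
        · have : 0 ≤ ∏ p ∈ S, (1 + 1/(p:ℝ)) := prod_nonneg fun p _ => by positivity
          positivity
        · apply mul_le_mul b1 b2 (hp _ fun p h => hpf p (mem_filter.1 h).1)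
          have : 0 ≤ ∏ p ∈ S, (1 + 1/(p:ℝ)) := prod_nonneg fun p _ => by positivity
          positivity
    _ = _ := by ring

open Finset in
lemma aux_g (g : ℕ → ℝ) (hg1 : g 1 = 1)
    (hgm : ∀ m n : ℕ, 0 < m → 0 < n → Nat.Coprime m n → g (m * n) = g m * g n)
    (T : Finset ℕ) (hT : ∀ p ∈ T, p.Prime) :
    g (∏ p ∈ T, p) = ∏ p ∈ T, g p ∧ Squarefree (∏ p ∈ T, p) := by
  induction T using Finset.induction_on with
  | empty => simp [hg1]
  | insert p T hp ih =>
    have hT' : ∀ q ∈ T, q.Prime := fun q hq => hT q (mem_insert_of_mem hq)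
    have hpp := hT p (mem_insert_self _ _)
    obtain ⟨i1, i2⟩ := ih hT'
    have hc : Nat.Coprime p (∏ q ∈ T, q) := Nat.Coprime.prod_right fun q hq =>
      (Nat.coprime_primes hpp (hT' q hq)).2 (by rintro rfl; exact hp hq)
    rw [prod_insert hp, prod_insert hp]
    refine ⟨?_, ?_⟩
    · rw [hgm _ _ hpp.pos (prod_pos fun q hq => (hT' q hq).pos) hc, i1]
    · exact (Nat.squarefree_mul hc).2 ⟨hpp.squarefree, i2⟩

theorem sum_totient_ratio_pow_le :
    ∃ c : ℝ, 0 < c ∧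
      ∀ (N M : ℕ), 0 < N → 0 < M →
      ∀ a : ℕ → ℕ, (∀ n, 1 ≤ n → n ≤ N → 0 < a n ∧ a n ≤ M) →
      ∀ α : ℝ, α ∈ Set.Ioc (0 : ℝ) 1 →
      ∀ y : ℝ, y = max (Real.log M ^ α) 2 →
      ∀ K : ℝ, 0 < K →
      ∀ g : ℕ → ℝ, g 1 = 1 →
      (∀ m n : ℕ, 0 < m → 0 < n → Nat.Coprime m n → g (m * n) = g m * g n) →
      (∀ n : ℕ, Squarefree n → (∀ p : ℕ, p.Prime → p ∣ n → (p : ℝ) ≤ y) → 0 < g n) →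
      (∀ n : ℕ, Squarefree n → (∀ p : ℕ, p.Prime → p ∣ n → (p : ℝ) ≤ y) →
        (((Finset.Icc 1 N).filter fun k => n ∣ a k).card : ℝ) ≤ K / g n) →
      ∀ s : ℕ, 0 < s →
      ∑ n ∈ Finset.Icc 1 N, ((a n : ℝ) / (Nat.totient (a n) : ℝ)) ^ s ≤
        K * (c / α) ^ s *
          ∏ p ∈ (Finset.range (⌊y⌋₊ + 1)).filter Nat.Prime,
            (1 + ((1 + 1 / (p : ℝ)) ^ s - 1) / g p) := by
  refine ⟨6 * Real.exp 4 * Real.exp (2 / Real.log 2), by positivity, ?_⟩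
  intro N M hN hM a ha α hα y hy K hK g hg1 hgm hgpos hω s hs
  set c := 6 * Real.exp 4 * Real.exp (2 / Real.log 2) with hc
  have hc0 : 0 < c := by positivity
  have hα0 : 0 < α := hα.1
  have hy2 : 2 ≤ y := hy ▸ le_max_right _ _
  set P := (Finset.range (⌊y⌋₊ + 1)).filter Nat.Prime with hP
  set h : ℕ → ℝ := fun p => (1 + 1 / (p : ℝ)) ^ s - 1 with hh
  have hh0 : ∀ p, 0 ≤ h p := fun p => by
    have : (1:ℝ) ≤ (1 + 1 / (p : ℝ)) ^ s := one_le_pow₀ (by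
      have : 0 ≤ 1/(p:ℝ) := by positivity
      linarith)
    simp only [hh]; linarith
  have hPp : ∀ p ∈ P, p.Prime := fun p hp => (Finset.mem_filter.1 hp).2
  have hPy : ∀ p ∈ P, (p:ℝ) ≤ y := fun p hp => by
    have := Finset.mem_range.1 (Finset.mem_filter.1 hp).1
    exact (Nat.le_floor_iff (by linarith)).1 (by omega)
  have key : ∀ n ∈ Finset.Icc 1 N, ((a n : ℝ) / (Nat.totient (a n) : ℝ)) ^ s ≤
      (c/α)^s * ∑ T ∈ P.powerset, if (∏ p ∈ T, p) ∣ a n then ∏ p ∈ T, h p else 0 := by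
    intro n hn
    obtain ⟨hn1, hn2⟩ := Finset.mem_Icc.1 hn
    obtain ⟨h1, h2⟩ := ha n hn1 hn2
    have h3 := aux_ratio (a n) M h1 h2 α hα y hy
    refine (pow_le_pow_left₀ (by positivity) h3 s).trans (le_of_eq ?_)
    rw [mul_pow, ← Finset.prod_pow]
    congr 1
    have e : ∀ p, (1 + 1/(p:ℕ):ℝ)^s = 1 + h p := fun p => by simp only [hh]; ring
    rw [Finset.prod_congr rfl (fun p _ => e p), Finset.prod_one_add, ← Finset.sum_filter]
    apply Finset.sum_congr _ (fun _ _ => rfl)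
    ext T
    simp only [Finset.mem_powerset, Finset.mem_filter]
    constructor
    · intro hT
      have hT' : T ⊆ P := fun p hp => (Finset.mem_filter.1 (hT hp)).1
      exact ⟨hT', Finset.prod_primes_dvd _ (fun p hp => (hPp p (hT' hp)).prime)
        (fun p hp => (Finset.mem_filter.1 (hT hp)).2)⟩
    · rintro ⟨hT, hd⟩ p hp
      exact Finset.mem_filter.2 ⟨hT hp, (Finset.dvd_prod_of_mem _ hp).trans hd⟩
  refine (Finset.sum_le_sum key).trans ?_
  rw [← Finset.mul_sum, Finset.sum_comm, mul_comm K, mul_assoc]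
  apply mul_le_mul_of_nonneg_left _ (by positivity)
  rw [Finset.prod_one_add, Finset.mul_sum]
  apply Finset.sum_le_sum
  intro T hT
  have hTP := Finset.mem_powerset.1 hT
  obtain ⟨e1, e2⟩ := aux_g g hg1 hgm T (fun p hp => hPp p (hTP hp))
  rw [← Finset.sum_filter, Finset.sum_const, nsmul_eq_mul, Finset.prod_div_distrib, ← e1]
  have h5 := hω _ e2 (fun p hp hd => by
    obtain ⟨q, hq, hpq⟩ := (hp.prime.dvd_finsetProd_iff _).1 hd
    have := (Nat.prime_dvd_prime_iff_eq hp (hPp q (hTP hq))).1 hpq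
    subst this
    exact hPy _ (hTP hq))
  calc _ ≤ K / g (∏ p ∈ T, p) * ∏ p ∈ T, h p :=
        mul_le_mul_of_nonneg_right h5 (Finset.prod_nonneg fun p _ => hh0 p)
    _ = _ := by ring
end

section
/- Let N, M be positive integers, a_1, ..., a_N positive integers with a_n ≤ M for all n, and for d ∈ ℕ set ω(d) = #{n ≤ N : d divides a_n}. Let α ∈ (0,1], y = max((ln M)^α, 2), and let 𝒟 be the collection of squarefree positive integers all of whose prime divisors lie in (1, y]. Suppose γ > 0, c_0 > 0, g is a multiplicative arithmetic function with g(p) ≥ c_0 for every prime p, L := Σ_p 1/(p·g(p)) < ∞ (sum over all primes), and ω(n) ≤ γN/g(n) for every n ∈ 𝒟. Then there exists a constant C > 0 depending only on γ, L, c_0, and α such that for every s ∈ ℕ, Σ_{n=1}^{N} (a_n/φ(a_n))^s ≤ exp(s·log log(s+2) + C·s) · N. -/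
section
open Finset

lemma aux_pow_dvd (p k : ℕ) (hp : 0 < p) : p ^ k ∣ (p * k).factorial := by
  induction k with
  | zero => simp
  | succ k ih =>
    have h1 : (p * (k+1)).factorial = (p * (k+1)) * (p * (k+1) - 1).factorial :=
      (Nat.mul_factorial_pred (by positivity)).symm
    rw [h1, pow_succ, mul_comm (p^k)]
    apply mul_dvd_mul (Dvd.intro _ rfl)
    refine ih.trans (Nat.factorial_dvd_factorial ?_)
    rw [mul_add]; omega

lemma aux_prod_dvd (n : ℕ) : ∏ p ∈ (range (n+1)).filter Nat.Prime, p ^ (n / p) ∣ n.factorial := by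
  apply Finset.prod_dvd_of_isRelPrime
  · intro p hp q hq hpq
    simp only [coe_filter, Set.mem_ofPred_eq] at hp hq
    change IsRelPrime _ _
    exact Nat.coprime_iff_isRelPrime.1 (Nat.Coprime.pow _ _ ((Nat.coprime_primes hp.2 hq.2).2 hpq))
  · intro p hp
    simp only [mem_filter] at hp
    exact (aux_pow_dvd p _ hp.2.pos).trans (Nat.factorial_dvd_factorial (Nat.mul_div_le n p))

noncomputable def auxA (n : ℕ) : ℝ := ∑ k ∈ range (n+1), if k.Prime then Real.log k / k else 0

lemma auxA_nonneg (n : ℕ) : 0 ≤ auxA n := by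
  unfold auxA
  apply sum_nonneg
  intro k _
  split_ifs
  · exact div_nonneg (Real.log_natCast_nonneg k) (by positivity)
  · exact le_rfl

lemma auxA_le (n : ℕ) (hn : 1 ≤ n) : auxA n ≤ Real.log n + Real.log 4 := by
  have hn0 : (0:ℝ) < n := by exact_mod_cast hn
  have h1 : ∑ p ∈ (range (n+1)).filter Nat.Prime, ((n / p : ℕ) : ℝ) * Real.log p ≤ n * Real.log n := by
    have h := Nat.le_of_dvd (Nat.factorial_pos n) (aux_prod_dvd n)
    have h2 := h.trans (Nat.factorial_le_pow n)
    have h3 : ((∏ p ∈ (range (n+1)).filter Nat.Prime, p ^ (n / p) : ℕ) : ℝ) ≤ ((n ^ n : ℕ) : ℝ) := by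
      exact_mod_cast h2
    have h4 := Real.log_le_log (by
      push_cast
      apply prod_pos
      intro p hp
      have := (mem_filter.1 hp).2.pos
      positivity) h3
    push_cast at h4
    rw [Real.log_prod, Real.log_pow] at h4
    · simpa [Real.log_pow] using h4
    · intro p hp
      have := (mem_filter.1 hp).2.pos
      positivity
  have h2 : ∑ p ∈ (range (n+1)).filter Nat.Prime, Real.log p ≤ n * Real.log 4 := by
    have h := primorial_le_four_pow n
    have h3 : ((primorial n : ℕ) : ℝ) ≤ ((4 ^ n : ℕ) : ℝ) := by exact_mod_cast h
    have h4 := Real.log_le_log (by exact_mod_cast primorial_pos n) h3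
    unfold primorial at h4
    push_cast at h4
    rw [Real.log_prod, Real.log_pow] at h4
    · exact h4
    · intro p hp
      have := (mem_filter.1 hp).2.pos
      positivity
  have h3 : n * auxA n ≤ ∑ p ∈ (range (n+1)).filter Nat.Prime, (((n / p : ℕ) : ℝ) * Real.log p + Real.log p) := by
    unfold auxA
    rw [← sum_filter, mul_sum]
    apply sum_le_sum
    intro p hp
    have hp0 := (mem_filter.1 hp).2.pos
    have hp0' : (0:ℝ) < p := by exact_mod_cast hp0
    have h5 : (n:ℝ) / p ≤ ((n / p : ℕ) : ℝ) + 1 := by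
      rw [div_le_iff₀ hp0']
      have := Nat.lt_div_mul_add (a := n) hp0
      have h6 : n ≤ (n / p + 1) * p := by
        rw [add_mul]; omega
      exact_mod_cast h6
    have h7 := mul_le_mul_of_nonneg_right h5 (Real.log_natCast_nonneg p)
    calc (n:ℝ) * (Real.log p / p) = (n:ℝ) / p * Real.log p := by ring
      _ ≤ _ := h7
      _ = _ := by ring
  rw [sum_add_distrib] at h3
  have : (n:ℝ) * auxA n ≤ n * (Real.log n + Real.log 4) := by linarith
  exact le_of_mul_le_mul_left this hn0

lemma aux_abel (m : ℕ) (hm : 2 ≤ m) (n : ℕ) (hmn : m ≤ n) :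
    (∑ k ∈ Ioc m n, if k.Prime then (1:ℝ) / k else 0) ≤
      auxA n / Real.log n - auxA m / Real.log m + (Real.log (Real.log n) - Real.log (Real.log m))
       + Real.log 4 * (1 / Real.log m - 1 / Real.log n) := by
  induction n, hmn using Nat.le_induction with
  | base => simp
  | succ n hmn ih =>
    rw [sum_Ioc_succ_top hmn]
    have hu : 0 < Real.log n := Real.log_pos (by exact_mod_cast (by omega : 1 < n))
    have hv : Real.log n ≤ Real.log ((n+1 : ℕ):ℝ) := Real.log_le_log (by exact_mod_cast (by omega : 0 < n)) (by push_cast; linarith)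
    have hA : auxA (n+1) = auxA n + (if (n+1).Prime then (1:ℝ) / ((n+1 : ℕ):ℝ) else 0) * Real.log ((n+1 : ℕ):ℝ) := by
      unfold auxA
      rw [sum_range_succ _ (n+1)]
      congr 1
      split_ifs
      · ring
      · simp
    have hAn := auxA_le n (by omega)
    rw [hA]
    set w := (if (n+1).Prime then (1:ℝ) / ((n+1 : ℕ):ℝ) else 0)
    set v := Real.log ((n+1 : ℕ):ℝ)
    set u := Real.log n
    have hv0 : 0 < v := lt_of_lt_of_le hu hv
    have h1 : 1 - u / v ≤ Real.log v - Real.log u := by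
      rw [← Real.log_div hv0.ne' hu.ne']
      have := Real.one_sub_inv_le_log_of_pos (div_pos hv0 hu)
      rwa [inv_div] at this
    have h2 : 0 ≤ 1 / u - 1 / v := sub_nonneg.2 (one_div_le_one_div_of_le hu hv)
    have h3 := mul_le_mul_of_nonneg_right hAn h2
    have h4 : (u + Real.log 4) * (1/u - 1/v) = (1 - u / v) + Real.log 4 * (1/u-1/v) := by
      field_simp
    have h5 : (auxA n + w * v) / v = auxA n / v + w := by field_simp
    rw [h5]
    have h6 : auxA n * (1/u - 1/v) = auxA n / u - auxA n / v := by ring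
    nlinarith

lemma aux_mertens_s1 (m : ℕ) (hm : 2 ≤ m) (n : ℕ) (hmn : m ≤ n) :
    (∑ k ∈ Ioc m n, if k.Prime then (1:ℝ) / k else 0) ≤
      3 + (Real.log (Real.log n) - Real.log (Real.log m)) := by
  have h := aux_abel m hm n hmn
  have hu : 0 < Real.log n := Real.log_pos (by exact_mod_cast (by omega : 1 < n))
  have hl2 : 0 < Real.log 2 := Real.log_pos (by norm_num)
  have hum : Real.log 2 ≤ Real.log m := Real.log_le_log (by norm_num) (by exact_mod_cast hm)
  have h1 : auxA n / Real.log n ≤ 1 + Real.log 4 * (1 / Real.log n) := by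
    rw [div_le_iff₀ hu]
    have := auxA_le n (by omega)
    field_simp
    exact this
  have h2 : 0 ≤ auxA m / Real.log m := div_nonneg (auxA_nonneg m) (by linarith)
  have h4 : Real.log 4 = 2 * Real.log 2 := by
    rw [show (4:ℝ) = 2^2 by norm_num, Real.log_pow]; norm_num
  have h3 : Real.log 4 * (1 / Real.log m) ≤ 2 := by
    rw [mul_one_div, div_le_iff₀ (by linarith)]
    linarith
  linarith

/-- first factor -/
lemma aux_small_s1 (s : ℕ) :
    ∑ p ∈ (range (s+1)).filter Nat.Prime, (1:ℝ) / ((p:ℝ) - 1) ≤ Real.log (Real.log (s+2)) + 6 := by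
  have h0 : ∑ p ∈ (range (s+1)).filter Nat.Prime, (1:ℝ) / ((p:ℝ) - 1) ≤
      ∑ p ∈ (range (s+2+1)).filter Nat.Prime, (1 / (p:ℝ) + 1 / ((p:ℝ) * ((p:ℝ)-1))) := by
    refine (sum_le_sum_of_subset_of_nonneg (t := (range (s+2+1)).filter Nat.Prime) ?_ ?_).trans (le_of_eq ?_)
    · exact filter_subset_filter _ (range_subset_range.2 (by omega))
    · intro p hp _
      have : (2:ℝ) ≤ p := by exact_mod_cast (mem_filter.1 hp).2.two_le
      exact one_div_nonneg.2 (by linarith)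
    · apply sum_congr rfl
      intro p hp
      have : (2:ℝ) ≤ p := by exact_mod_cast (mem_filter.1 hp).2.two_le
      have h1 : (p:ℝ) - 1 ≠ 0 := by linarith
      field_simp
      ring
  have h1 : ∑ p ∈ (range (s+2+1)).filter Nat.Prime, 1 / (p:ℝ) ≤
      1/2 + ∑ k ∈ Ioc 2 (s+2), (if k.Prime then (1:ℝ) / k else 0) := by
    rw [← sum_filter]
    have : (range (s+2+1)).filter Nat.Prime = insert 2 ((Ioc 2 (s+2)).filter Nat.Prime) := by
      ext k
      simp only [mem_filter, mem_range, mem_insert, mem_Ioc]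
      constructor
      · rintro ⟨h, hk⟩
        have := hk.two_le
        by_cases h2 : k = 2
        · exact Or.inl h2
        · right; exact ⟨⟨by omega, by omega⟩, hk⟩
      · rintro (rfl | h)
        · exact ⟨by omega, Nat.prime_two⟩
        · exact ⟨by omega, h.2⟩
    rw [this, sum_insert (by simp)]
    norm_num
  have h2 : ∀ n : ℕ, ∑ p ∈ (range (n+2)).filter Nat.Prime, 1 / ((p:ℝ) * ((p:ℝ)-1)) ≤ 1 - 1 / ((n:ℝ)+1) := by
    intro n
    induction n with
    | zero => simp [sum_filter, sum_range_succ, Nat.not_prime_zero, Nat.not_prime_one]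
    | succ n ih =>
      rw [sum_filter, sum_range_succ, ← sum_filter]
      have : (if (n+2).Prime then 1 / (((n+2:ℕ):ℝ) * (((n+2:ℕ):ℝ)-1)) else 0) ≤ 1 / ((n:ℝ)+1) - 1 / ((n:ℝ)+2) := by
        have e : 1 / (((n+2:ℕ):ℝ) * (((n+2:ℕ):ℝ)-1)) = 1 / ((n:ℝ)+1) - 1 / ((n:ℝ)+2) := by
          push_cast
          have : (n:ℝ) + 2 - 1 = n + 1 := by ring
          rw [this]
          field_simp
          ring
        split_ifs
        · exact e.le
        · rw [← e]; push_cast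
          have : (n:ℝ) + 2 - 1 = n + 1 := by ring
          rw [this]
          positivity
      have e2 : (((n+1:ℕ):ℝ) + 1) = n + 2 := by push_cast; ring
      rw [e2]
      linarith
  have h3 := h2 (s+1)
  have h4 : (0:ℝ) ≤ 1 / (((s+1:ℕ):ℝ)+1) := by positivity
  have h5 := aux_mertens_s1 2 le_rfl (s+2) (by omega)
  rw [sum_add_distrib] at h0
  have h6 : -Real.log (Real.log 2) ≤ 1 := by
    have := Real.one_sub_inv_le_log_of_pos (Real.log_pos (by norm_num : (1:ℝ)<2))
    have h7 : (Real.log 2)⁻¹ ≤ 2 := by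
      rw [inv_le_comm₀ (Real.log_pos (by norm_num)) (by norm_num)]
      have := Real.log_two_gt_d9
      norm_num at this ⊢
      linarith
    linarith
  push_cast at h5
  have e3 : s + 1 + 2 = s + 2 + 1 := by omega
  rw [e3] at h3
  linarith

lemma aux_prod_exp (s : Finset ℕ) (f : ℕ → ℝ) (hf : ∀ p ∈ s, 0 ≤ f p) :
    ∏ p ∈ s, (1 + f p) ≤ Real.exp (∑ p ∈ s, f p) := by
  rw [Real.exp_sum]
  apply prod_le_prod
  · intro p hp; linarith [hf p hp]
  · intro p hp; linarith [Real.add_one_le_exp (f p)]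

lemma aux_count (a M : ℕ) (ha : 0 < a) (haM : a ≤ M) :
    (a.primeFactors.card : ℝ) * Real.log 2 ≤ Real.log M := by
  have h1 : 2 ^ a.primeFactors.card ≤ ∏ p ∈ a.primeFactors, p :=
    pow_card_le_prod _ _ _ (fun p hp => (Nat.prime_of_mem_primeFactors hp).two_le)
  have h2 := (h1.trans (Nat.le_of_dvd ha (Nat.prod_primeFactors_dvd a))).trans haM
  have h3 : ((2 ^ a.primeFactors.card : ℕ):ℝ) ≤ M := by exact_mod_cast h2
  have h4 := Real.log_le_log (by positivity) h3
  push_cast at h4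
  rwa [Real.log_pow] at h4

lemma aux_large_s1 (α : ℝ) (hα : α ∈ Set.Ioc (0:ℝ) 1) (a M : ℕ) (ha : 0 < a) (haM : a ≤ M) (y : ℝ)
    (hy : y = max (Real.log M ^ α) 2) :
    ∑ p ∈ a.primeFactors.filter (fun p : ℕ => y < (p:ℝ)), (1:ℝ) / ((p:ℝ) - 1) ≤
      9 + 2 * |Real.log (2/α)| := by
  obtain ⟨hα0, hα1⟩ := hα
  set X := Real.log M with hX
  have hX0 : 0 ≤ X := Real.log_natCast_nonneg M
  have hy2 : 2 ≤ y := by rw [hy]; exact le_max_right _ _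
  have hyX : X ^ α ≤ y := by rw [hy]; exact le_max_left _ _
  have hcount := aux_count a M ha haM
  have hl2 := Real.log_two_gt_d9
  have step : ∀ p ∈ a.primeFactors, (1:ℝ) / ((p:ℝ) - 1) ≤ 2 * (1 / (p:ℝ)) := by
    intro p hp
    have : (2:ℝ) ≤ p := by exact_mod_cast (Nat.prime_of_mem_primeFactors hp).two_le
    rw [mul_one_div, div_le_div_iff₀ (by linarith) (by linarith)]
    linarith
  rw [← sum_filter_add_sum_filter_not _ (fun p : ℕ => (p:ℝ) ≤ X)]
  have hA : ∑ p ∈ (a.primeFactors.filter (fun p : ℕ => y < (p:ℝ))).filter (fun p : ℕ => (p:ℝ) ≤ X),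
      (1:ℝ) / ((p:ℝ) - 1) ≤ 6 + 2 * |Real.log (2/α)| := by
    calc _ ≤ ∑ p ∈ (a.primeFactors.filter (fun p : ℕ => y < (p:ℝ))).filter (fun p : ℕ => (p:ℝ) ≤ X), 2 * (1 / (p:ℝ)) :=
          sum_le_sum (fun p hp => step p (mem_filter.1 (mem_filter.1 hp).1).1)
      _ ≤ ∑ p ∈ (Ioc ⌊y⌋₊ ⌊X⌋₊).filter Nat.Prime, 2 * (1 / (p:ℝ)) := by
          apply sum_le_sum_of_subset_of_nonneg
          · intro p hp
            simp only [mem_filter, mem_Ioc] at hp ⊢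
            refine ⟨⟨?_, Nat.le_floor hp.2⟩, Nat.prime_of_mem_primeFactors hp.1.1⟩
            exact (Nat.floor_lt (by linarith)).2 hp.1.2
          · intros; positivity
      _ = 2 * ∑ p ∈ (Ioc ⌊y⌋₊ ⌊X⌋₊), (if p.Prime then (1:ℝ) / p else 0) := by
          rw [← mul_sum, sum_filter]
      _ ≤ _ := by
          rcases le_or_gt ⌊y⌋₊ ⌊X⌋₊ with hle | hgt
          · have hm2 : 2 ≤ ⌊y⌋₊ := Nat.le_floor (by exact_mod_cast hy2)
            have h := aux_mertens_s1 ⌊y⌋₊ hm2 ⌊X⌋₊ hle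
            set m := ⌊y⌋₊
            set n := ⌊X⌋₊
            have hm2' : (2:ℝ) ≤ m := by exact_mod_cast hm2
            have hn2' : (2:ℝ) ≤ n := by exact_mod_cast hm2.trans hle
            have hnX : (n:ℝ) ≤ X := Nat.floor_le hX0
            have hym : y < m + 1 := Nat.lt_floor_add_one y
            have h1 : Real.log n ≤ Real.log X := Real.log_le_log (by linarith) hnX
            have h2 : α * Real.log X ≤ 2 * Real.log m := by
              rw [← Real.log_rpow (by linarith)]
              have : Real.log (X ^ α) ≤ Real.log ((m:ℝ)^2) := by
                apply Real.log_le_log (Real.rpow_pos_of_pos (by linarith) _)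
                nlinarith
              rwa [Real.log_pow] at this
            have hn0 : 0 < Real.log n := Real.log_pos (by linarith)
            have hm0 : 0 < Real.log m := Real.log_pos (by linarith)
            have h3 : Real.log (Real.log n) ≤ Real.log (2/α * Real.log m) := by
              apply Real.log_le_log hn0
              rw [div_mul_eq_mul_div, le_div_iff₀ hα0]
              nlinarith
            rw [Real.log_mul (by positivity) hm0.ne'] at h3
            have := le_abs_self (Real.log (2/α))
            linarith
          · rw [Ioc_eq_empty (by omega)]
            have := abs_nonneg (Real.log (2/α))
            simp; linarith
  have hB : ∑ p ∈ (a.primeFactors.filter (fun p : ℕ => y < (p:ℝ))).filter (fun p : ℕ => ¬ (p:ℝ) ≤ X),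
      (1:ℝ) / ((p:ℝ) - 1) ≤ 3 := by
    rcases hX0.eq_or_lt with h0 | h0
    · have : a.primeFactors.card = 0 := by
        by_contra hne
        have : (1:ℝ) ≤ a.primeFactors.card := by exact_mod_cast Nat.one_le_iff_ne_zero.2 hne
        nlinarith
      rw [card_eq_zero] at this
      rw [this]; simp
    · calc _ ≤ ∑ p ∈ (a.primeFactors.filter (fun p : ℕ => y < (p:ℝ))).filter (fun p : ℕ => ¬ (p:ℝ) ≤ X), 2 * (1 / X) := by
            apply sum_le_sum
            intro p hp
            refine (step p (mem_filter.1 (mem_filter.1 hp).1).1).trans ?_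
            have := not_le.1 (mem_filter.1 hp).2
            gcongr
        _ ≤ ∑ p ∈ a.primeFactors, 2 * (1 / X) := by
            apply sum_le_sum_of_subset_of_nonneg
            · exact (filter_subset _ _).trans (filter_subset _ _)
            · intros; positivity
        _ ≤ 3 := by
            rw [sum_const, nsmul_eq_mul, mul_one_div, mul_div_assoc', div_le_iff₀ h0]
            nlinarith
  linarith

lemma aux_gprod (c₀ : ℝ) (hc₀ : 0 < c₀) (g : ℕ → ℝ) (hg1 : g 1 = 1)
    (hg : ∀ m n : ℕ, 0 < m → 0 < n → Nat.Coprime m n → g (m * n) = g m * g n)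
    (T : Finset ℕ) (hT : ∀ p ∈ T, p.Prime) : g (∏ p ∈ T, p) = ∏ p ∈ T, g p := by
  induction T using Finset.induction_on with
  | empty => simpa using hg1
  | insert q T hq ih =>
    have hT' : ∀ p ∈ T, p.Prime := fun p hp => hT p (mem_insert_of_mem hp)
    have hqp := hT q (mem_insert_self _ _)
    rw [prod_insert hq, prod_insert hq, hg _ _ hqp.pos (prod_pos fun p hp => (hT' p hp).pos), ih hT']
    exact Nat.Coprime.prod_right fun p hp => (Nat.coprime_primes hqp (hT' p hp)).2 (by rintro rfl; exact hq hp)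

lemma aux_dvd_iff (T : Finset ℕ) (hT : ∀ p ∈ T, p.Prime) (a : ℕ) :
    (∏ p ∈ T, p) ∣ a ↔ ∀ p ∈ T, p ∣ a := by
  constructor
  · intro h p hp
    exact (dvd_prod_of_mem _ hp).trans h
  · intro h
    exact prod_primes_dvd a (fun p hp => (hT p hp).prime) h

lemma aux_main (γ c₀ : ℝ) (hc₀ : 0 < c₀) (N : ℕ) (a : ℕ → ℕ) (g : ℕ → ℝ) (hg1 : g 1 = 1)
    (hg : ∀ m n : ℕ, 0 < m → 0 < n → Nat.Coprime m n → g (m * n) = g m * g n)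
    (y : ℝ)
    (hω : ∀ n : ℕ, Squarefree n → (∀ p : ℕ, p.Prime → p ∣ n → (p : ℝ) ≤ y) →
        (((Finset.Icc 1 N).filter fun k => n ∣ a k).card : ℝ) ≤ γ * N / g n)
    (P : Finset ℕ) (hP : ∀ p ∈ P, p.Prime ∧ (p:ℝ) ≤ y) (h : ℕ → ℝ) (hh : ∀ p ∈ P, 0 ≤ h p) :
    ∑ n ∈ Icc 1 N, ∏ p ∈ P.filter (fun p => p ∣ a n), (1 + h p) ≤
      γ * N * ∏ p ∈ P, (1 + h p / g p) := by
  have e : ∀ n, ∏ p ∈ P.filter (fun p => p ∣ a n), (1 + h p) =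
      ∑ T ∈ P.powerset, if (∏ p ∈ T, p) ∣ a n then ∏ p ∈ T, h p else 0 := by
    intro n
    rw [prod_one_add, ← sum_filter]
    apply sum_congr _ (fun _ _ => rfl)
    ext T
    simp only [mem_powerset, mem_filter]
    constructor
    · intro hT
      have hTP : T ⊆ P := hT.trans (filter_subset _ _)
      refine ⟨hTP, (aux_dvd_iff T (fun p hp => (hP p (hTP hp)).1) _).2 fun p hp => (mem_filter.1 (hT hp)).2⟩
    · rintro ⟨hTP, hd⟩ p hp
      exact mem_filter.2 ⟨hTP hp, (aux_dvd_iff T (fun p hp => (hP p (hTP hp)).1) _).1 hd p hp⟩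
  simp_rw [e]
  rw [sum_comm, prod_one_add, mul_sum]
  apply sum_le_sum
  intro T hT
  have hTP := mem_powerset.1 hT
  have hTp : ∀ p ∈ T, p.Prime := fun p hp => (hP p (hTP hp)).1
  have hpr : 0 ≤ ∏ p ∈ T, h p := prod_nonneg fun p hp => hh p (hTP hp)
  have hw := hω (∏ p ∈ T, p) ?_ ?_
  · rw [← sum_filter, sum_const, nsmul_eq_mul]
    refine (mul_le_mul_of_nonneg_right hw hpr).trans (le_of_eq ?_)
    rw [aux_gprod c₀ hc₀ g hg1 hg T hTp, prod_div_distrib]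
    ring
  · refine Finset.squarefree_prod_of_pairwise_isCoprime (fun p hp q hq hpq => ?_) (fun p hp => (hTp p hp).prime.squarefree)
    exact Nat.coprime_iff_isRelPrime.1 ((Nat.coprime_primes (hTp p hp) (hTp q hq)).2 hpq)
  · intro p hp hd
    obtain ⟨q, hq, hpq⟩ := (hp.prime.dvd_finsetProd_iff _).1 hd
    rw [(Nat.prime_dvd_prime_iff_eq hp (hTp q hq)).1 hpq]
    exact (hP q (hTP hq)).2

lemma aux_ratio_s1 (a : ℕ) (ha : 0 < a) :
    (a:ℝ) / (a.totient : ℝ) ≤ Real.exp (∑ p ∈ a.primeFactors, (1:ℝ) / ((p:ℝ) - 1)) := by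
  have h := Nat.totient_mul_prod_primeFactors a
  have h' : (a.totient : ℝ) * ∏ p ∈ a.primeFactors, (p:ℝ) = a * ∏ p ∈ a.primeFactors, ((p:ℝ) - 1) := by
    have h2 : ((a.totient * ∏ p ∈ a.primeFactors, p : ℕ) : ℝ) = ((a * ∏ p ∈ a.primeFactors, (p - 1) : ℕ):ℝ) := by
      rw [h]
    push_cast at h2
    rw [h2]
    congr 1
    apply prod_congr rfl
    intro p hp
    rw [Nat.cast_sub (Nat.prime_of_mem_primeFactors hp).one_le]; simp
  have ht : (0:ℝ) < a.totient := by exact_mod_cast Nat.totient_pos.2 ha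
  have hp1 : ∀ p ∈ a.primeFactors, (0:ℝ) < (p:ℝ) - 1 := by
    intro p hp
    have : (2:ℝ) ≤ p := by exact_mod_cast (Nat.prime_of_mem_primeFactors hp).two_le
    linarith
  have hpos : 0 < ∏ p ∈ a.primeFactors, ((p:ℝ) - 1) := prod_pos hp1
  have e : (a:ℝ) / (a.totient : ℝ) = ∏ p ∈ a.primeFactors, (1 + 1 / ((p:ℝ) - 1)) := by
    have : ∏ p ∈ a.primeFactors, (1 + 1 / ((p:ℝ) - 1)) = ∏ p ∈ a.primeFactors, ((p:ℝ) / ((p:ℝ) - 1)) := by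
      apply prod_congr rfl
      intro p hp
      have := (hp1 p hp).ne'
      field_simp
      ring
    rw [this, prod_div_distrib, div_eq_div_iff ht.ne' hpos.ne']
    linarith
  rw [e]
  exact aux_prod_exp _ _ (fun p hp => (one_div_pos.2 (hp1 p hp)).le)

lemma aux_tsum (c₀ : ℝ) (hc₀ : 0 < c₀) (g : ℕ → ℝ) (hgp : ∀ p : ℕ, p.Prime → c₀ ≤ g p)
    (hs : Summable fun p : Nat.Primes => 1 / (((p : ℕ) : ℝ) * g (p : ℕ)))
    (P : Finset ℕ) (hP : ∀ p ∈ P, p.Prime) :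
    ∑ p ∈ P, 1 / ((p:ℝ) * g p) ≤ ∑' p : Nat.Primes, 1 / (((p : ℕ) : ℝ) * g (p : ℕ)) := by
  have h := Summable.sum_le_tsum (f := fun p : Nat.Primes => 1 / (((p : ℕ) : ℝ) * g (p : ℕ)))
    (P.subtype Nat.Prime) (by
    intro p _
    have := hgp p p.2
    have : 0 < g p := by linarith
    positivity) hs
  refine le_trans (le_of_eq ?_) h
  exact (sum_subtype_of_mem (fun p : ℕ => 1 / ((p:ℝ) * g p)) hP).symm

lemma aux_point (α : ℝ) (hα : α ∈ Set.Ioc (0:ℝ) 1) (a M : ℕ) (ha : 0 < a) (haM : a ≤ M) (y : ℝ)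
    (hy : y = max (Real.log M ^ α) 2) (s : ℕ) :
    ((a:ℝ) / (a.totient : ℝ)) ^ s ≤
      Real.exp (s * (Real.log (Real.log (s+2)) + 6 + (9 + 2 * |Real.log (2/α)|))) *
      ∏ p ∈ ((range (⌊y⌋₊ + 1)).filter (fun p => p.Prime ∧ s < p)).filter (fun p => p ∣ a),
        (1 + 4 * s / (p:ℝ)) := by
  have hy2 : 2 ≤ y := by rw [hy]; exact le_max_right _ _
  set P := (range (⌊y⌋₊ + 1)).filter (fun p => p.Prime ∧ s < p) with hPdef
  have hnn : ∀ p : ℕ, p.Prime → (0:ℝ) ≤ 1 / ((p:ℝ) - 1) := by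
    intro p hp
    have : (2:ℝ) ≤ p := by exact_mod_cast hp.two_le
    exact one_div_nonneg.2 (by linarith)
  have h1 : ∑ p ∈ a.primeFactors, (1:ℝ) / ((p:ℝ) - 1) ≤
      (∑ p ∈ (range (s+1)).filter Nat.Prime, (1:ℝ) / ((p:ℝ) - 1)) +
      (∑ p ∈ a.primeFactors.filter (fun p : ℕ => y < (p:ℝ)), (1:ℝ) / ((p:ℝ) - 1)) +
      ∑ p ∈ P.filter (fun p => p ∣ a), (1:ℝ) / ((p:ℝ) - 1) := by
    rw [← sum_filter_add_sum_filter_not a.primeFactors (fun p : ℕ => y < (p:ℝ)),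
      ← sum_filter_add_sum_filter_not (a.primeFactors.filter (fun p : ℕ => ¬ y < (p:ℝ))) (fun p : ℕ => p ≤ s)]
    have hA : ∑ p ∈ (a.primeFactors.filter (fun p : ℕ => ¬ y < (p:ℝ))).filter (fun p : ℕ => p ≤ s), (1:ℝ) / ((p:ℝ) - 1)
        ≤ ∑ p ∈ (range (s+1)).filter Nat.Prime, (1:ℝ) / ((p:ℝ) - 1) := by
      apply sum_le_sum_of_subset_of_nonneg
      · intro p hp
        simp only [mem_filter, mem_range] at hp ⊢
        exact ⟨by omega, Nat.prime_of_mem_primeFactors hp.1.1⟩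
      · intro p hp _
        exact hnn p (mem_filter.1 hp).2
    have hB : ∑ p ∈ (a.primeFactors.filter (fun p : ℕ => ¬ y < (p:ℝ))).filter (fun p : ℕ => ¬ p ≤ s), (1:ℝ) / ((p:ℝ) - 1)
        ≤ ∑ p ∈ P.filter (fun p => p ∣ a), (1:ℝ) / ((p:ℝ) - 1) := by
      apply sum_le_sum_of_subset_of_nonneg
      · intro p hp
        simp only [hPdef, mem_filter, mem_range] at hp ⊢
        refine ⟨⟨?_, Nat.prime_of_mem_primeFactors hp.1.1, by omega⟩, Nat.dvd_of_mem_primeFactors hp.1.1⟩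
        exact Nat.lt_succ_of_le (Nat.le_floor (not_lt.1 hp.1.2))
      · intro p hp _
        exact hnn p (mem_filter.1 (mem_filter.1 hp).1).2.1
    linarith
  have h2 := aux_small_s1 s
  have h3 := aux_large_s1 α hα a M ha haM y hy
  have h4 : Real.exp (s * ∑ p ∈ P.filter (fun p => p ∣ a), (1:ℝ) / ((p:ℝ) - 1)) ≤
      ∏ p ∈ P.filter (fun p => p ∣ a), (1 + 4 * s / (p:ℝ)) := by
    rw [mul_sum, Real.exp_sum]
    apply prod_le_prod
    · intros; positivity
    · intro p hp
      have hp' := (mem_filter.1 (mem_filter.1 hp).1).2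
      have hp2 : (2:ℝ) ≤ p := by exact_mod_cast hp'.1.two_le
      have hps : (s:ℝ) + 1 ≤ p := by exact_mod_cast hp'.2
      have hs0 : (0:ℝ) ≤ s := by positivity
      have hn : 0 ≤ (s:ℝ) * (1 / ((p:ℝ) - 1)) := mul_nonneg hs0 (hnn p hp'.1)
      have hle : (s:ℝ) * (1 / ((p:ℝ) - 1)) ≤ 1 := by
        rw [mul_one_div, div_le_one (by linarith)]; linarith
      have h5 := Real.abs_exp_sub_one_le (x := (s:ℝ) * (1 / ((p:ℝ) - 1))) (by rw [abs_of_nonneg hn]; exact hle)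
      rw [abs_of_nonneg hn] at h5
      have h6 := (le_abs_self _).trans h5
      have h7 : 2 * ((s:ℝ) * (1 / ((p:ℝ) - 1))) ≤ 4 * s / (p:ℝ) := by
        rw [mul_one_div, mul_div_assoc', div_le_div_iff₀ (by linarith) (by linarith)]
        nlinarith
      linarith
  have hr := aux_ratio_s1 a ha
  calc ((a:ℝ) / (a.totient : ℝ)) ^ s ≤ (Real.exp (∑ p ∈ a.primeFactors, (1:ℝ) / ((p:ℝ) - 1))) ^ s :=
        pow_le_pow_left₀ (by positivity) hr s
    _ = Real.exp (s * ∑ p ∈ a.primeFactors, (1:ℝ) / ((p:ℝ) - 1)) := by rw [Real.exp_nat_mul]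
    _ ≤ Real.exp (s * (Real.log (Real.log (s+2)) + 6 + (9 + 2 * |Real.log (2/α)|)) +
          s * ∑ p ∈ P.filter (fun p => p ∣ a), (1:ℝ) / ((p:ℝ) - 1)) := by
        apply Real.exp_le_exp.2
        rw [← mul_add]
        apply mul_le_mul_of_nonneg_left _ (by positivity)
        linarith
    _ ≤ _ := by
        rw [Real.exp_add]
        exact mul_le_mul_of_nonneg_left h4 (Real.exp_pos _).le


end

/-- Theorem (Radomskii, Theorem 2, inequality (1)): under the hypotheses of Theorem 1 with
`K = γN`, `g(p) ≥ c₀`, and `L = ∑_p 1/(p g(p)) < ∞`, there is a constant `C` depending only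
on `γ`, `L`, `c₀`, `α` such that `∑ (a_n/φ(a_n))^s ≤ exp(s log log(s+2) + Cs) N`. -/
theorem sum_totient_ratio_pow_le_exp (γ c₀ α L : ℝ) (hγ : 0 < γ) (hc₀ : 0 < c₀)
    (hα : α ∈ Set.Ioc (0 : ℝ) 1) :
    ∃ C : ℝ, 0 < C ∧
      ∀ (N M : ℕ), 0 < N → 0 < M →
      ∀ a : ℕ → ℕ, (∀ n, 1 ≤ n → n ≤ N → 0 < a n ∧ a n ≤ M) →
      ∀ g : ℕ → ℝ, g 1 = 1 →
      (∀ m n : ℕ, 0 < m → 0 < n → Nat.Coprime m n → g (m * n) = g m * g n) →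
      (∀ p : ℕ, p.Prime → c₀ ≤ g p) →
      (Summable fun p : Nat.Primes => 1 / (((p : ℕ) : ℝ) * g (p : ℕ))) →
      (∑' p : Nat.Primes, 1 / (((p : ℕ) : ℝ) * g (p : ℕ))) = L →
      ∀ y : ℝ, y = max (Real.log M ^ α) 2 →
      (∀ n : ℕ, Squarefree n → (∀ p : ℕ, p.Prime → p ∣ n → (p : ℝ) ≤ y) →
        (((Finset.Icc 1 N).filter fun k => n ∣ a k).card : ℝ) ≤ γ * N / g n) →
      ∀ s : ℕ, 0 < s →
      ∑ n ∈ Finset.Icc 1 N, ((a n : ℝ) / (Nat.totient (a n) : ℝ)) ^ s ≤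
        Real.exp (s * Real.log (Real.log (s + 2)) + C * s) * N := by
  refine ⟨15 + 2 * |Real.log (2/α)| + 4 * |L| + γ, by positivity, ?_⟩
  intro N M hN hM a ha g hg1 hg hgp hsum hL y hy hω s hs
  set P := (Finset.range (⌊y⌋₊ + 1)).filter (fun p => p.Prime ∧ s < p) with hPdef
  have hy2 : 2 ≤ y := by rw [hy]; exact le_max_right _ _
  have hP : ∀ p ∈ P, p.Prime ∧ (p:ℝ) ≤ y := by
    intro p hp
    have hp' := Finset.mem_filter.1 hp
    refine ⟨hp'.2.1, ?_⟩
    exact (Nat.le_floor_iff (by linarith)).1 (Nat.lt_succ_iff.1 (Finset.mem_range.1 hp'.1))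
  have hmain := aux_main γ c₀ hc₀ N a g hg1 hg y hω P hP (fun p => 4 * s / (p:ℝ))
    (fun p _ => by positivity)
  have hprod : ∏ p ∈ P, (1 + 4 * s / (p:ℝ) / g p) ≤ Real.exp (4 * |L| * s) := by
    refine (aux_prod_exp P (fun p => 4 * s / (p:ℝ) / g p) ?_).trans (Real.exp_le_exp.2 ?_)
    · intro p hp
      have := hgp p (hP p hp).1
      have : 0 < g p := by linarith
      positivity
    · have h := aux_tsum c₀ hc₀ g hgp hsum P (fun p hp => (hP p hp).1)
      rw [hL] at h
      have e : ∑ p ∈ P, 4 * s / (p:ℝ) / g p = 4 * s * ∑ p ∈ P, 1 / ((p:ℝ) * g p) := by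
        rw [Finset.mul_sum]
        apply Finset.sum_congr rfl
        intro p _
        rw [div_div]; ring
      rw [e]
      have h2 := mul_le_mul_of_nonneg_left (h.trans (le_abs_self L)) (by positivity : (0:ℝ) ≤ 4 * s)
      linarith
  have hγs : γ ≤ Real.exp (γ * s) := by
    have h1 : (1:ℝ) ≤ s := by exact_mod_cast hs
    have h2 := Real.add_one_le_exp (γ * s)
    nlinarith
  set E := Real.exp (s * (Real.log (Real.log (s+2)) + 6 + (9 + 2 * |Real.log (2/α)|))) with hE
  have hE0 : 0 < E := Real.exp_pos _
  calc ∑ n ∈ Finset.Icc 1 N, ((a n : ℝ) / (Nat.totient (a n) : ℝ)) ^ s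
      ≤ ∑ n ∈ Finset.Icc 1 N, E * ∏ p ∈ P.filter (fun p => p ∣ a n), (1 + 4 * s / (p:ℝ)) := by
        apply Finset.sum_le_sum
        intro n hn
        have hn' := Finset.mem_Icc.1 hn
        obtain ⟨h1, h2⟩ := ha n hn'.1 hn'.2
        exact aux_point α hα (a n) M h1 h2 y hy s
    _ ≤ E * (γ * N * ∏ p ∈ P, (1 + 4 * s / (p:ℝ) / g p)) := by
        rw [← Finset.mul_sum]
        exact mul_le_mul_of_nonneg_left hmain hE0.le
    _ ≤ E * (Real.exp (γ * s) * N * Real.exp (4 * |L| * s)) := by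
        gcongr
        apply Finset.prod_nonneg
        intro p hp
        have := hgp p (hP p hp).1
        have : 0 < g p := by linarith
        positivity
    _ = _ := by
        have : Real.exp (s * Real.log (Real.log (s + 2)) + (15 + 2 * |Real.log (2/α)| + 4 * |L| + γ) * s)
            = E * Real.exp (γ * s) * Real.exp (4 * |L| * s) := by
          rw [hE, ← Real.exp_add, ← Real.exp_add]
          congr 1
          ring
        rw [this]
        ring
end

section
/- Let N, M be positive integers, a_1, ..., a_N positive integers with a_n ≤ M for all n, and for d ∈ ℕ set ω(d) = #{n ≤ N : d divides a_n}. Let α ∈ (0,1], y = max((ln M)^α, 2), and let 𝒟 be the collection of squarefree positive integers all of whose prime divisors lie in (1, y]. Suppose γ > 0, c_0 > 0, g is a multiplicative arithmetic function with g(p) ≥ c_0 for every prime p, L := Σ_p 1/(p·g(p)) < ∞ (sum over all primes), and ω(n) ≤ γN/g(n) for every n ∈ 𝒟. Then there exist constants c_1, c_2 > 0 depending only on γ, L, c_0, and α such that for every real t > 0, #{n ≤ N : a_n/φ(a_n) > t} ≤ c_1 · exp(−exp(c_2·t)) · N. -/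
lemma sum_log_div_le (n : ℕ) (hn : 1 ≤ n) :
    ∑ p ∈ (Finset.range (n+1)).filter Nat.Prime, Real.log p / p ≤ 2 * Real.log n := by
  set P := (Finset.range (n+1)).filter Nat.Prime with hP
  have hmem : ∀ p ∈ P, p.Prime ∧ p ≤ n := by
    intro p hp
    simp only [hP, Finset.mem_filter, Finset.mem_range] at hp
    exact ⟨hp.2, by omega⟩
  have hdvd : ∏ p ∈ P, p ^ (n / p) ∣ n.factorial := by
    apply Finset.prod_dvd_of_isRelPrime
    · intro p hp q hq hpq
      have := (Nat.coprime_primes (hmem p hp).1 (hmem q hq).1).2 hpq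
      exact (Nat.coprime_iff_isRelPrime.1 (Nat.Coprime.pow _ _ this))
    · intro p hp
      rw [(hmem p hp).1.pow_dvd_factorial_iff (b := Nat.log p n + 2) (by omega)]
      have := Finset.single_le_sum (f := fun i => n / p ^ i) (s := Finset.Ico 1 (Nat.log p n + 2))
        (fun i _ => Nat.zero_le _) (a := 1) (by simp)
      simpa using this
  have hle : ∏ p ∈ P, p ^ (n / p) ≤ n ^ n :=
    (Nat.le_of_dvd (Nat.factorial_pos n) hdvd).trans (Nat.factorial_le_pow n)
  have hpos : ∀ p ∈ P, (0:ℝ) < p := fun p hp => by exact_mod_cast (hmem p hp).1.pos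
  have hlog : ∑ p ∈ P, ((n / p : ℕ) : ℝ) * Real.log p ≤ n * Real.log n := by
    have h1 : ((∏ p ∈ P, p ^ (n / p) : ℕ) : ℝ) ≤ (n:ℝ) ^ n := by exact_mod_cast hle
    have h0 : (0:ℝ) < ((∏ p ∈ P, p ^ (n / p) : ℕ) : ℝ) := by
      push_cast
      exact Finset.prod_pos fun p hp => pow_pos (hpos p hp) _
    have h2 := Real.log_le_log h0 h1
    rw [Real.log_pow] at h2
    push_cast at h2
    rw [Real.log_prod (fun p hp => (pow_pos (hpos p hp) _).ne')] at h2
    simpa [Real.log_pow] using h2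
  have hn0 : (0:ℝ) < n := by exact_mod_cast hn
  have key : (n:ℝ) / 2 * ∑ p ∈ P, Real.log p / p ≤ ∑ p ∈ P, ((n / p : ℕ) : ℝ) * Real.log p := by
    rw [Finset.mul_sum]
    apply Finset.sum_le_sum
    intro p hp
    have hp0 := hpos p hp
    have hl : 0 ≤ Real.log p := Real.log_natCast_nonneg p
    have h3 : n ≤ 2 * (p * (n / p)) := by
      have h4 := Nat.div_add_mod n p
      have h5 := Nat.mod_lt n (hmem p hp).1.pos
      have h6 : 1 ≤ n / p := (Nat.one_le_div_iff (hmem p hp).1.pos).2 (hmem p hp).2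
      have : p * 1 ≤ p * (n / p) := Nat.mul_le_mul_left _ h6
      omega
    have h3' : (n:ℝ) ≤ 2 * (p * ((n/p : ℕ):ℝ)) := by exact_mod_cast h3
    have : (n:ℝ) / 2 * (Real.log p / p) = (n / (2 * p)) * Real.log p := by field_simp
    rw [this]
    apply mul_le_mul_of_nonneg_right _ hl
    rw [div_le_iff₀ (by positivity)]
    linarith
  have := key.trans hlog
  have h7 : (n:ℝ) * (∑ p ∈ P, Real.log p / p) ≤ n * (2 * Real.log n) := by linarith
  exact le_of_mul_le_mul_left h7 hn0

lemma zeta_bd (σ : ℝ) (hσ : 1 < σ) (s : Finset ℕ) :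
    ∏ p ∈ s with p.Prime, (1 - (p:ℝ) ^ (-σ))⁻¹ ≤ 1 + 1 / (σ - 1) := by
  let f : ℕ →* ℝ :=
    { toFun := fun n => (n:ℝ) ^ (-σ)
      map_one' := by simp
      map_mul' := fun m n => by
        push_cast
        exact Real.mul_rpow (Nat.cast_nonneg _) (Nat.cast_nonneg _) }
  have hs : Summable f := by
    change Summable fun n : ℕ => (n:ℝ) ^ (-σ)
    exact Real.summable_nat_rpow.2 (by linarith)
  have h1 := EulerProduct.prod_filter_prime_geometric_eq_tsum_factoredNumbers hs s
  have h2 : ∏ p ∈ s with p.Prime, (1 - (p:ℝ) ^ (-σ))⁻¹ = ∑' m : Nat.factoredNumbers s, f m := h1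
  rw [h2]
  have h3 : ∑' m : Nat.factoredNumbers s, f m ≤ ∑' m, f m :=
    hs.tsum_subtype_le _ _ (fun n => Real.rpow_nonneg (Nat.cast_nonneg _) _)
  have h4 : ∑' m, f m = ∑' n : ℕ, 1 / (n + 1 : ℝ) ^ σ := by
    rw [hs.tsum_eq_zero_add]
    have : f 0 = 0 := by
      change ((0:ℕ):ℝ) ^ (-σ) = 0
      rw [Nat.cast_zero, Real.zero_rpow (by linarith)]
    rw [this, zero_add]
    congr 1
    ext n
    change ((n+1:ℕ):ℝ) ^ (-σ) = _
    rw [Real.rpow_neg (Nat.cast_nonneg _)]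
    simp
  have h5 := ZetaAsymptotics.zeta_limit_aux1 hσ
  have h6 : 0 ≤ ZetaAsymptotics.termTSum σ := tsum_nonneg fun n => ZetaAsymptotics.term_nonneg _ _
  have h7 : 0 ≤ σ * ZetaAsymptotics.termTSum σ := mul_nonneg (by linarith) h6
  linarith

lemma mertens_upper (x : ℝ) (hx : 2 ≤ x) :
    ∏ p ∈ (Finset.range (⌊x⌋₊+1)).filter Nat.Prime, (1 - (p:ℝ)⁻¹)⁻¹
      ≤ 3 * Real.exp 4 * Real.log x := by
  set P := (Finset.range (⌊x⌋₊+1)).filter Nat.Prime with hP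
  have hl2 : 0.69 < Real.log 2 := by have := Real.log_two_gt_d9; linarith
  have hlx : Real.log 2 ≤ Real.log x := Real.log_le_log (by norm_num) hx
  have hlx0 : 0 < Real.log x := by linarith
  set δ := 1 / Real.log x with hδ
  have hδ0 : 0 < δ := by positivity
  have hz := zeta_bd (1 + δ) (by linarith) (Finset.range (⌊x⌋₊+1))
  rw [← hP] at hz
  have hfl : 1 ≤ ⌊x⌋₊ := Nat.le_floor (by push_cast; linarith)
  have hA := sum_log_div_le ⌊x⌋₊ hfl
  rw [← hP] at hA
  have hA' : ∑ p ∈ P, Real.log p / p ≤ 2 * Real.log x := by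
    have := Real.log_le_log (by exact_mod_cast hfl) (Nat.floor_le (show 0 ≤ x by linarith))
    linarith
  have hpt : ∀ p ∈ P, (1 - (p:ℝ)⁻¹)⁻¹ ≤
      (1 - (p:ℝ) ^ (-(1+δ)))⁻¹ * Real.exp (2 * δ * (Real.log p / p)) := by
    intro p hp
    have hpp : p.Prime := (Finset.mem_filter.1 hp).2
    have hp2 : (2:ℝ) ≤ p := by exact_mod_cast hpp.two_le
    have hp0 : (0:ℝ) < p := by linarith
    have hi : (p:ℝ)⁻¹ ≤ 1/2 := by
      rw [inv_le_comm₀ hp0 (by norm_num)]; linarith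
    have hi0 : 0 < (p:ℝ)⁻¹ := by positivity
    have hlp : 0 ≤ Real.log p := Real.log_natCast_nonneg p
    have hpow : (p:ℝ) ^ (-(1+δ)) = (p:ℝ)⁻¹ * Real.exp (-(δ * Real.log p)) := by
      rw [neg_add, Real.rpow_add hp0, Real.rpow_neg_one, Real.rpow_def_of_pos hp0]
      ring_nf
    have he1 : 1 - δ * Real.log p ≤ Real.exp (-(δ * Real.log p)) := by
      have := Real.add_one_le_exp (-(δ * Real.log p)); linarith
    have he2 : Real.exp (-(δ * Real.log p)) ≤ 1 := by
      rw [Real.exp_le_one_iff]; have := mul_nonneg hδ0.le hlp; linarith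
    rw [hpow]
    set E := Real.exp (-(δ * Real.log p))
    set i := (p:ℝ)⁻¹
    have hE : i * E ≤ i := by nlinarith
    have hd1 : 0 < 1 - i := by linarith
    have hd2 : 0 < 1 - i * E := by linarith
    have hu : 0 ≤ δ * (Real.log p * i) := by positivity
    have hex : 1 + 2 * δ * (Real.log p / p) ≤ Real.exp (2 * δ * (Real.log p / p)) := by
      have := Real.add_one_le_exp (2 * δ * (Real.log p / p)); linarith
    rw [div_eq_mul_inv] at hex ⊢
    change 1 + 2 * δ * (Real.log p * i) ≤ Real.exp (2 * δ * (Real.log p * i)) at hex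
    change _ ≤ _ * Real.exp (2 * δ * (Real.log p * i))
    set X := Real.exp (2 * δ * (Real.log p * i))
    have hkey : 1 - i * E ≤ (1 - i) * X := by
      have h1 : 1 - i * E ≤ 1 - i + δ * (Real.log p * i) := by nlinarith
      have h2 : (1 - i) * (1 + 2 * δ * (Real.log p * i)) ≤ (1 - i) * X :=
        mul_le_mul_of_nonneg_left hex hd1.le
      nlinarith
    rw [inv_mul_eq_div, le_div_iff₀ hd2, inv_mul_le_iff₀ hd1]
    exact hkey
  have h1 : ∏ p ∈ P, (1 - (p:ℝ)⁻¹)⁻¹ ≤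
      ∏ p ∈ P, ((1 - (p:ℝ) ^ (-(1+δ)))⁻¹ * Real.exp (2 * δ * (Real.log p / p))) := by
    apply Finset.prod_le_prod _ hpt
    intro p hp
    have hpp : p.Prime := (Finset.mem_filter.1 hp).2
    have : (p:ℝ)⁻¹ ≤ 1 := inv_le_one_of_one_le₀ (by exact_mod_cast hpp.one_le)
    exact inv_nonneg.2 (by linarith)
  rw [Finset.prod_mul_distrib, ← Real.exp_sum, ← Finset.mul_sum] at h1
  have h2 : Real.exp (2 * δ * ∑ p ∈ P, Real.log p / p) ≤ Real.exp 4 := by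
    apply Real.exp_le_exp.2
    calc _ ≤ 2 * δ * (2 * Real.log x) := by gcongr
      _ = 4 := by rw [hδ]; field_simp; norm_num
  have h3 : 1 + 1 / (1 + δ - 1) ≤ 3 * Real.log x := by
    have : 1 / (1 + δ - 1) = Real.log x := by rw [hδ]; simp
    rw [this]; linarith
  calc _ ≤ _ := h1
    _ ≤ (3 * Real.log x) * Real.exp 4 :=
      mul_le_mul (hz.trans h3) h2 (Real.exp_pos _).le (by positivity)
    _ = _ := by ring

lemma inv_le_exp (p : ℕ) (hp : p.Prime) : (1 - (p:ℝ)⁻¹)⁻¹ ≤ Real.exp (2 * (p:ℝ)⁻¹) := by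
  have hp2 : (2:ℝ) ≤ p := by exact_mod_cast hp.two_le
  have hp0 : (0:ℝ) < p := by linarith
  have hi : (p:ℝ)⁻¹ ≤ 1/2 := by
    rw [inv_le_comm₀ hp0 (by norm_num)]; linarith
  have hi0 : 0 < (p:ℝ)⁻¹ := by positivity
  set i := (p:ℝ)⁻¹
  have := Real.add_one_le_exp (2 * i)
  rw [inv_le_iff_one_le_mul₀ (by linarith)]
  nlinarith

lemma one_le_inv (p : ℕ) (hp : p.Prime) : 1 ≤ (1 - (p:ℝ)⁻¹)⁻¹ := by
  have hp2 : (2:ℝ) ≤ p := by exact_mod_cast hp.two_le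
  have hp0 : (0:ℝ) < p := by linarith
  have hi : (p:ℝ)⁻¹ ≤ 1/2 := by
    rw [inv_le_comm₀ hp0 (by norm_num)]; linarith
  have hi0 : 0 < (p:ℝ)⁻¹ := by positivity
  exact one_le_inv₀ (by linarith) |>.2 (by linarith)

lemma sum_log_primeFactors (a : ℕ) (ha : 0 < a) :
    ∑ p ∈ a.primeFactors, Real.log p ≤ Real.log a := by
  have hle : ∏ p ∈ a.primeFactors, p ≤ a := Nat.le_of_dvd ha (Nat.prod_primeFactors_dvd a)
  have hpos : ∀ p ∈ a.primeFactors, (0:ℝ) < p := fun p hp => by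
    exact_mod_cast (Nat.prime_of_mem_primeFactors hp).pos
  have h1 : ∏ p ∈ a.primeFactors, (p:ℝ) ≤ a := by
    have h3 : ((∏ p ∈ a.primeFactors, p : ℕ) : ℝ) ≤ a := Nat.cast_le.2 hle
    rwa [Nat.cast_prod] at h3
  have h2 := Real.log_le_log (Finset.prod_pos hpos) h1
  rwa [Real.log_prod (fun p hp => (hpos p hp).ne')] at h2

lemma large_primes (α : ℝ) (hα : 0 < α) (hα1 : α ≤ 1) (a M : ℕ) (ha : 0 < a) (haM : a ≤ M)
    (y : ℝ) (hy : y = max (Real.log M ^ α) 2) :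
    ∏ p ∈ a.primeFactors.filter (fun p : ℕ => ¬ ((p:ℝ) ≤ y)), (1 - (p:ℝ)⁻¹)⁻¹ ≤ Real.exp (4 / α + 4) := by
  set ℓ := Real.log M with hℓ
  have hl2 : 0.69 < Real.log 2 := by have := Real.log_two_gt_d9; linarith
  set x := max ℓ 2 with hx
  have hx2 : 2 ≤ x := le_max_right _ _
  have hy2 : 2 ≤ y := hy ▸ le_max_right _ _
  have hlx0 : 0 < Real.log x := by
    have := Real.log_le_log (by norm_num) hx2; linarith
  have hly0 : 0 < Real.log y := by
    have := Real.log_le_log (by norm_num) hy2; linarith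
  have hlog : α * Real.log x ≤ Real.log y := by
    rcases le_total ℓ 2 with h | h
    · rw [hx, max_eq_right h]
      have := Real.log_le_log (by norm_num) hy2
      nlinarith
    · rw [hx, max_eq_left h, ← Real.log_rpow (by linarith)]
      apply Real.log_le_log (Real.rpow_pos_of_pos (by linarith) _)
      rw [hy]; exact le_max_left _ _
  have hfl : 1 ≤ ⌊x⌋₊ := Nat.le_floor (by push_cast; linarith)
  have hA := sum_log_div_le ⌊x⌋₊ hfl
  set P := (Finset.range (⌊x⌋₊+1)).filter Nat.Prime with hP
  have hA' : ∑ p ∈ P, Real.log p / p ≤ 2 * Real.log x := by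
    have := Real.log_le_log (by exact_mod_cast hfl) (Nat.floor_le (show 0 ≤ x by linarith))
    linarith
  set S := a.primeFactors.filter (fun p : ℕ => ¬ ((p:ℝ) ≤ y)) with hS
  have hSp : ∀ p ∈ S, p.Prime ∧ y < p := by
    intro p hp
    rw [hS, Finset.mem_filter] at hp
    exact ⟨Nat.prime_of_mem_primeFactors hp.1, not_le.1 hp.2⟩
  have hsum : ∑ p ∈ S, (p:ℝ)⁻¹ ≤ 2 / α + 2 := by
    rw [← Finset.sum_filter_add_sum_filter_not S (fun p : ℕ => (p:ℝ) ≤ x)]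
    have h1 : ∑ p ∈ S.filter (fun p : ℕ => (p:ℝ) ≤ x), (p:ℝ)⁻¹ ≤ 2 / α := by
      have h2 : ∑ p ∈ S.filter (fun p : ℕ => (p:ℝ) ≤ x), (p:ℝ)⁻¹ ≤
          ∑ p ∈ P, (Real.log p / p) / Real.log y := by
        calc _ ≤ ∑ p ∈ S.filter (fun p : ℕ => (p:ℝ) ≤ x), (Real.log p / p) / Real.log y := by
              apply Finset.sum_le_sum
              intro p hp
              obtain ⟨hp1, hp2⟩ := hSp p (Finset.mem_filter.1 hp).1
              have hp0 : (0:ℝ) < p := by exact_mod_cast hp1.pos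
              have : Real.log y ≤ Real.log p := Real.log_le_log (by linarith) hp2.le
              rw [le_div_iff₀ hly0, div_eq_inv_mul]
              exact mul_le_mul_of_nonneg_left this (by positivity)
          _ ≤ _ := by
              apply Finset.sum_le_sum_of_subset_of_nonneg
              · intro p hp
                rw [Finset.mem_filter] at hp
                rw [hP, Finset.mem_filter, Finset.mem_range]
                exact ⟨Nat.lt_succ_of_le (Nat.le_floor hp.2), (hSp p hp.1).1⟩
              · intro p _ _
                have := Real.log_natCast_nonneg p
                positivity
      rw [← Finset.sum_div] at h2
      refine h2.trans ?_
      rw [div_le_div_iff₀ hly0 hα]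
      nlinarith
    have h2 : ∑ p ∈ S.filter (fun p : ℕ => ¬ ((p:ℝ) ≤ x)), (p:ℝ)⁻¹ ≤ 2 := by
      rcases (Real.log_natCast_nonneg M).eq_or_lt with h0 | h0
      · have : M ≤ 1 := by
          by_contra hM
          have : 0 < Real.log M := Real.log_pos (by exact_mod_cast (not_le.1 hM))
          linarith
        have ha1 : a = 1 := by omega
        have : S = ∅ := by rw [hS, ha1]; simp
        rw [this]; simp
      · have hb : ∑ p ∈ S.filter (fun p : ℕ => ¬ ((p:ℝ) ≤ x)), (p:ℝ)⁻¹ ≤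
            ∑ p ∈ a.primeFactors, Real.log p * (2 / ℓ) := by
          calc _ ≤ ∑ p ∈ S.filter (fun p : ℕ => ¬ ((p:ℝ) ≤ x)), Real.log p * (2 / ℓ) := by
                apply Finset.sum_le_sum
                intro p hp
                rw [Finset.mem_filter, not_le] at hp
                have hp2 : ℓ < p := (le_max_left _ _).trans_lt hp.2
                have hp3 : 2 ≤ (p:ℝ) := hx2.trans hp.2.le
                have := Real.log_le_log (by norm_num) hp3
                have h5 : (p:ℝ)⁻¹ ≤ 1 / ℓ := by
                  rw [← one_div]; exact one_div_le_one_div_of_le h0 hp2.le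
                have h6 : 1 / ℓ ≤ Real.log p * (2 / ℓ) := by
                  rw [mul_div_assoc', div_le_div_iff_of_pos_right h0]; linarith
                exact h5.trans h6
            _ ≤ _ := by
                apply Finset.sum_le_sum_of_subset_of_nonneg
                · exact (Finset.filter_subset _ _).trans (Finset.filter_subset _ _)
                · intro p _ _
                  have := Real.log_natCast_nonneg p
                  positivity
        rw [← Finset.sum_mul] at hb
        have h7 := sum_log_primeFactors a ha
        have h8 : Real.log a ≤ ℓ :=
          Real.log_le_log (by exact_mod_cast ha) (by exact_mod_cast haM)
        calc _ ≤ _ := hb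
          _ ≤ ℓ * (2 / ℓ) := by
            apply mul_le_mul_of_nonneg_right (h7.trans h8) (by positivity)
          _ = 2 := mul_div_cancel₀ _ h0.ne'
    linarith
  calc _ ≤ ∏ p ∈ S, Real.exp (2 * (p:ℝ)⁻¹) := by
        apply Finset.prod_le_prod
        · intro p hp
          have := one_le_inv p (hSp p hp).1
          linarith
        · intro p hp; exact inv_le_exp p (hSp p hp).1
    _ = Real.exp (2 * ∑ p ∈ S, (p:ℝ)⁻¹) := by rw [← Real.exp_sum, Finset.mul_sum]
    _ ≤ _ := by
        apply Real.exp_le_exp.2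
        have : 4 / α = 2 * (2 / α) := by ring
        linarith

lemma prod_primes_facts (T : Finset ℕ) (hT : ∀ p ∈ T, p.Prime) (g : ℕ → ℝ) (g1 : g 1 = 1)
    (gm : ∀ m n : ℕ, 0 < m → 0 < n → Nat.Coprime m n → g (m * n) = g m * g n) :
    Squarefree (∏ p ∈ T, p) ∧ (∀ q : ℕ, q.Prime → q ∣ ∏ p ∈ T, p → q ∈ T) ∧
    g (∏ p ∈ T, p) = ∏ p ∈ T, g p ∧ ∀ n : ℕ, (∏ p ∈ T, p) ∣ n ↔ ∀ p ∈ T, p ∣ n := by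
  classical
  induction T using Finset.induction_on with
  | empty => 
    refine ⟨by simp, fun q hq h => ?_, by simpa using g1, by simp⟩
    simp at h
    exact absurd h hq.ne_one
  | insert r T hr ih =>
    obtain ⟨h1, h2, h3, h4⟩ := ih (fun p hp => hT p (Finset.mem_insert_of_mem hp))
    have hrp : r.Prime := hT r (Finset.mem_insert_self _ _)
    have hTp : ∀ p ∈ T, p.Prime := fun p hp => hT p (Finset.mem_insert_of_mem hp)
    have hco : Nat.Coprime r (∏ p ∈ T, p) := by
      rw [Nat.Prime.coprime_iff_not_dvd hrp]
      exact fun h => hr (h2 r hrp h)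
    rw [Finset.prod_insert hr, Finset.prod_insert hr]
    refine ⟨(Nat.squarefree_mul hco).2 ⟨hrp.prime.squarefree, h1⟩, ?_, ?_, ?_⟩
    · intro q hq h
      rcases (Nat.Prime.dvd_mul hq).1 h with h | h
      · rw [(Nat.prime_dvd_prime_iff_eq hq hrp).1 h]; exact Finset.mem_insert_self _ _
      · exact Finset.mem_insert_of_mem (h2 q hq h)
    · rw [gm _ _ hrp.pos (Finset.prod_pos fun p hp => (hTp p hp).pos) hco, h3]
    · intro n
      rw [Finset.forall_mem_insert, ← h4]
      exact ⟨fun h => ⟨dvd_of_mul_right_dvd h, dvd_of_mul_left_dvd h⟩,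
        fun h => hco.mul_dvd_of_dvd_of_dvd h.1 h.2⟩

lemma moment (γ y : ℝ) (N : ℕ) (a : ℕ → ℕ) (g f : ℕ → ℝ) (g1 : g 1 = 1)
    (gm : ∀ m n : ℕ, 0 < m → 0 < n → Nat.Coprime m n → g (m * n) = g m * g n)
    (hω : ∀ n : ℕ, Squarefree n → (∀ p : ℕ, p.Prime → p ∣ n → (p : ℝ) ≤ y) →
        (((Finset.Icc 1 N).filter fun k => n ∣ a k).card : ℝ) ≤ γ * N / g n)
    (P : Finset ℕ) (hP : ∀ p ∈ P, p.Prime ∧ (p:ℝ) ≤ y) (hf : ∀ p ∈ P, 0 ≤ f p) :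
    ∑ k ∈ Finset.Icc 1 N, ∏ p ∈ P with p ∣ a k, (1 + f p) ≤
      γ * N * ∏ p ∈ P, (1 + f p / g p) := by
  classical
  have h1 : ∀ k, ∏ p ∈ P with p ∣ a k, (1 + f p) =
      ∑ T ∈ P.powerset, if (∏ p ∈ T, p) ∣ a k then ∏ p ∈ T, f p else 0 := by
    intro k
    rw [Finset.prod_one_add, ← Finset.sum_filter]
    apply Finset.sum_congr _ fun _ _ => rfl
    ext T
    simp only [Finset.mem_powerset, Finset.mem_filter, Finset.subset_iff]
    constructor
    · intro h
      refine ⟨fun p hp => (h hp).1, ?_⟩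
      rw [(prod_primes_facts T (fun p hp => (hP p (h hp).1).1) g g1 gm).2.2.2]
      exact fun p hp => (h hp).2
    · rintro ⟨h, h'⟩ p hp
      rw [(prod_primes_facts T (fun p hp => (hP p (h hp)).1) g g1 gm).2.2.2] at h'
      exact ⟨h hp, h' p hp⟩
  simp_rw [h1]
  rw [Finset.sum_comm, Finset.prod_one_add, Finset.mul_sum]
  apply Finset.sum_le_sum
  intro T hT
  rw [Finset.mem_powerset] at hT
  obtain ⟨a1, a2, a3, a4⟩ := prod_primes_facts T (fun p hp => (hP p (hT hp)).1) g g1 gm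
  have := hω _ a1 (fun p hp h => (hP p (hT (a2 p hp h))).2)
  rw [a3] at this
  rw [← Finset.sum_filter, Finset.sum_const, nsmul_eq_mul, Finset.prod_div_distrib]
  calc _ ≤ (γ * N / ∏ p ∈ T, g p) * ∏ p ∈ T, f p :=
        mul_le_mul_of_nonneg_right this (Finset.prod_nonneg fun p hp => hf p (hT hp))
    _ = _ := by ring

lemma ratio_eq (a : ℕ) (ha : 0 < a) :
    (a : ℝ) / (Nat.totient a : ℝ) = ∏ p ∈ a.primeFactors, (1 - (p:ℝ)⁻¹)⁻¹ := by
  have h := Nat.totient_eq_mul_prod_factors a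
  have h' : (Nat.totient a : ℝ) = a * ∏ p ∈ a.primeFactors, (1 - (p : ℝ)⁻¹) := by
    have h2 := congrArg (fun q : ℚ => (q : ℝ)) h
    push_cast at h2
    exact h2
  have ha0 : (a:ℝ) ≠ 0 := by exact_mod_cast ha.ne'
  rw [h', Finset.prod_inv_distrib, div_mul_eq_div_div, div_self ha0, one_div]


/-- Theorem (Radomskii, Theorem 2, inequality (2)): under the hypotheses of Theorem 1 with
`K = γN`, `g(p) ≥ c₀`, and `L = ∑_p 1/(p g(p)) < ∞`, there are constants `c₁, c₂` depending
only on `γ`, `L`, `c₀`, `α` such that `#{n ≤ N : a_n/φ(a_n) > t} ≤ c₁ exp(-exp(c₂ t)) N`. -/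
theorem card_totient_ratio_gt_le (γ c₀ α L : ℝ) (hγ : 0 < γ) (hc₀ : 0 < c₀)
    (hα : α ∈ Set.Ioc (0 : ℝ) 1) :
    ∃ c₁ c₂ : ℝ, 0 < c₁ ∧ 0 < c₂ ∧
      ∀ (N M : ℕ), 0 < N → 0 < M →
      ∀ a : ℕ → ℕ, (∀ n, 1 ≤ n → n ≤ N → 0 < a n ∧ a n ≤ M) →
      ∀ g : ℕ → ℝ, g 1 = 1 →
      (∀ m n : ℕ, 0 < m → 0 < n → Nat.Coprime m n → g (m * n) = g m * g n) →
      (∀ p : ℕ, p.Prime → c₀ ≤ g p) →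
      (Summable fun p : Nat.Primes => 1 / (((p : ℕ) : ℝ) * g (p : ℕ))) →
      (∑' p : Nat.Primes, 1 / (((p : ℕ) : ℝ) * g (p : ℕ))) = L →
      ∀ y : ℝ, y = max (Real.log M ^ α) 2 →
      (∀ n : ℕ, Squarefree n → (∀ p : ℕ, p.Prime → p ∣ n → (p : ℝ) ≤ y) →
        (((Finset.Icc 1 N).filter fun k => n ∣ a k).card : ℝ) ≤ γ * N / g n) →
      ∀ t : ℝ, 0 < t →
      (((Finset.Icc 1 N).filter fun n => t < (a n : ℝ) / (Nat.totient (a n) : ℝ)).card : ℝ) ≤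
        c₁ * Real.exp (-Real.exp (c₂ * t)) * N := by
  obtain ⟨hα0, hα1⟩ := hα
  set C1 := Real.exp (4 / α + 4) with hC1
  set C2 := 3 * Real.exp 4 with hC2
  set K := 2 * Real.exp 2 * |L| + 1 with hK
  have hC1p : 0 < C1 := Real.exp_pos _
  have hC2p : 0 < C2 := by positivity
  set c₂ := 1 / (C1 * C2 * Real.exp K) with hc₂
  have hc₂p : 0 < c₂ := by positivity
  refine ⟨max γ (Real.exp 2), c₂, lt_max_of_lt_left hγ, hc₂p, ?_⟩
  intro N M hN hM a ha g g1 gm gc hsum hL y hy hω t ht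
  have hNp : (0:ℝ) < N := by exact_mod_cast hN
  set s := Real.exp (c₂ * t) with hs
  have hs0 : 0 < s := Real.exp_pos _
  set B := (Finset.Icc 1 N).filter fun n => t < (a n : ℝ) / (Nat.totient (a n) : ℝ) with hB
  rcases lt_or_ge s 2 with hs2 | hs2
  · have h1 : (B.card : ℝ) ≤ N := by
      have := Finset.card_filter_le (Finset.Icc 1 N)
        (fun n => t < (a n : ℝ) / (Nat.totient (a n) : ℝ))
      rw [Nat.card_Icc] at this
      exact_mod_cast this
    have h2 : 1 ≤ max γ (Real.exp 2) * Real.exp (-s) := by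
      calc 1 ≤ Real.exp 2 * Real.exp (-s) := by
            rw [← Real.exp_add]; exact Real.one_le_exp (by linarith)
        _ ≤ _ := mul_le_mul_of_nonneg_right (le_max_right _ _) (Real.exp_pos _).le
    nlinarith
  set P := (Finset.range (⌊y⌋₊+1)).filter (fun p : ℕ => p.Prime ∧ s < p) with hP
  have hy2 : 2 ≤ y := hy ▸ le_max_right _ _
  have hPm : ∀ p ∈ P, p.Prime ∧ (p:ℝ) ≤ y ∧ s < p := by
    intro p hp
    rw [hP, Finset.mem_filter, Finset.mem_range] at hp
    refine ⟨hp.2.1, ?_, hp.2.2⟩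
    exact (Nat.le_floor_iff (by linarith)).1 (Nat.lt_succ_iff.1 hp.1)
  set f : ℕ → ℝ := fun p => ((1 - (p:ℝ)⁻¹)⁻¹) ^ s - 1 with hf
  have hf0 : ∀ p ∈ P, 0 ≤ f p := by
    intro p hp
    have := Real.one_le_rpow (one_le_inv p (hPm p hp).1) hs0.le
    simp only [hf]; linarith
  have hfu : ∀ p ∈ P, f p ≤ 2 * Real.exp 2 * s * (p:ℝ)⁻¹ := by
    intro p hp
    obtain ⟨hp1, -, hp2⟩ := hPm p hp
    have hp0 : (0:ℝ) < p := by exact_mod_cast hp1.pos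
    have h1 : ((1 - (p:ℝ)⁻¹)⁻¹) ^ s ≤ Real.exp (2 * (p:ℝ)⁻¹ * s) := by
      rw [Real.exp_mul]
      exact Real.rpow_le_rpow (zero_le_one.trans (one_le_inv p hp1)) (inv_le_exp p hp1) hs0.le
    set u := 2 * (p:ℝ)⁻¹ * s with hu
    have hu0 : 0 ≤ u := by positivity
    have hu2 : u ≤ 2 := by
      have : (p:ℝ)⁻¹ * s ≤ 1 := by
        rw [inv_mul_le_iff₀ hp0]; linarith
      rw [hu]; linarith
    have h2 : Real.exp u - 1 ≤ u * Real.exp u := by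
      have h3 := Real.add_one_le_exp (-u)
      have h4 : Real.exp (-u) * Real.exp u = 1 := by rw [← Real.exp_add]; simp
      nlinarith [Real.exp_pos u]
    have h3 : u * Real.exp u ≤ u * Real.exp 2 :=
      mul_le_mul_of_nonneg_left (Real.exp_le_exp.2 hu2) hu0
    have h4 : 2 * Real.exp 2 * s * (p:ℝ)⁻¹ = u * Real.exp 2 := by rw [hu]; ring
    rw [h4]; simp only [hf]; linarith
  have hgp : ∀ p : ℕ, p.Prime → 0 < g p := fun p hp => hc₀.trans_le (gc p hp)
  have hPL : ∑ p ∈ P, 1 / ((p:ℝ) * g p) ≤ L := by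
    rw [← hL]
    let Q : Finset Nat.Primes := P.subtype Nat.Prime
    have h1 : ∑ p ∈ P, 1 / ((p:ℝ) * g p) =
        ∑ p ∈ Q, 1 / (((p : ℕ) : ℝ) * g (p : ℕ)) := by
      exact (Finset.sum_subtype_of_mem (fun p : ℕ => 1 / ((p : ℝ) * g p))
        (fun p hp => (hPm p hp).1)).symm
    rw [h1]
    have h2 : ∀ p : Nat.Primes, 0 ≤ 1 / (((p : ℕ) : ℝ) * g (p : ℕ)) := fun p => by
      have := hgp p p.2
      positivity
    exact hsum.sum_le_tsum Q (fun p _ => h2 p)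
  have hmom := moment γ y N a g f g1 gm hω P (fun p hp => ⟨(hPm p hp).1, (hPm p hp).2.1⟩) hf0
  have hprod : ∏ p ∈ P, (1 + f p / g p) ≤ Real.exp (2 * Real.exp 2 * s * |L|) := by
    calc _ ≤ ∏ p ∈ P, Real.exp (2 * Real.exp 2 * s * (1 / ((p:ℝ) * g p))) := by
          apply Finset.prod_le_prod
          · intro p hp
            have := div_nonneg (hf0 p hp) (hgp p (hPm p hp).1).le
            linarith
          · intro p hp
            have hg := hgp p (hPm p hp).1
            have h1 : f p / g p ≤ 2 * Real.exp 2 * s * (1 / ((p:ℝ) * g p)) := by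
              rw [div_le_iff₀ hg]
              refine (hfu p hp).trans (le_of_eq ?_)
              field_simp
            have h2 := Real.add_one_le_exp (2 * Real.exp 2 * s * (1 / ((p:ℝ) * g p)))
            linarith
      _ = Real.exp (2 * Real.exp 2 * s * ∑ p ∈ P, 1 / ((p:ℝ) * g p)) := by
          rw [← Real.exp_sum, Finset.mul_sum]
      _ ≤ _ := by
          apply Real.exp_le_exp.2
          exact mul_le_mul_of_nonneg_left (hPL.trans (le_abs_self L)) (by positivity)
  have hnn : ∀ k, 0 ≤ ∏ p ∈ P with p ∣ a k, (1 + f p) := fun k =>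
    Finset.prod_nonneg fun p hp => by have := hf0 p (Finset.mem_filter.1 hp).1; linarith
  have hbad : ∀ k ∈ B, Real.exp (K * s) ≤ ∏ p ∈ P with p ∣ a k, (1 + f p) := by
    intro k hk
    rw [hB, Finset.mem_filter, Finset.mem_Icc] at hk
    obtain ⟨⟨hk1, hk2⟩, hk3⟩ := hk
    obtain ⟨hak0, hakM⟩ := ha k hk1 hk2
    rw [ratio_eq _ hak0] at hk3
    have hlarge := large_primes α hα0 hα1 (a k) M hak0 hakM y hy
    have hsmall := mertens_upper s hs2
    have hone : ∀ p ∈ (a k).primeFactors, 1 ≤ (1 - (p:ℝ)⁻¹)⁻¹ :=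
      fun p hp => one_le_inv p (Nat.prime_of_mem_primeFactors hp)
    rw [← Finset.prod_filter_mul_prod_filter_not (a k).primeFactors (fun p : ℕ => (p:ℝ) ≤ y),
      ← Finset.prod_filter_mul_prod_filter_not
        ((a k).primeFactors.filter (fun p : ℕ => (p:ℝ) ≤ y)) (fun p : ℕ => (p:ℝ) ≤ s)] at hk3
    have hsm : ∏ p ∈ ((a k).primeFactors.filter (fun p : ℕ => (p:ℝ) ≤ y)).filter
        (fun p : ℕ => (p:ℝ) ≤ s), (1 - (p:ℝ)⁻¹)⁻¹ ≤ C2 * (c₂ * t) := by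
      have h1 : Real.log s = c₂ * t := Real.log_exp _
      rw [h1] at hsmall
      refine le_trans ?_ hsmall
      apply Finset.prod_le_prod_of_subset_of_one_le
      · intro p hp
        simp only [Finset.mem_filter] at hp
        rw [Finset.mem_filter, Finset.mem_range]
        exact ⟨Nat.lt_succ_of_le (Nat.le_floor hp.2), Nat.prime_of_mem_primeFactors hp.1.1⟩
      · intro p hp
        simp only [Finset.mem_filter] at hp
        exact zero_le_one.trans (hone p hp.1.1)
      · intro p hp _
        exact one_le_inv p (Finset.mem_filter.1 hp).2
    have hset : ((a k).primeFactors.filter (fun p : ℕ => (p:ℝ) ≤ y)).filter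
        (fun p : ℕ => ¬ (p:ℝ) ≤ s) = P.filter (fun p => p ∣ a k) := by
      ext p
      simp only [hP, Finset.mem_filter, Finset.mem_range, Nat.mem_primeFactors, not_le]
      rw [Nat.lt_succ_iff, Nat.le_floor_iff (by linarith)]
      have := hak0.ne'
      tauto
    rw [hset] at hk3
    set H := ∏ p ∈ P with p ∣ a k, (1 - (p:ℝ)⁻¹)⁻¹ with hH
    have hH0 : 0 ≤ H := Finset.prod_nonneg fun p hp =>
      zero_le_one.trans (one_le_inv p (hPm p (Finset.mem_filter.1 hp).1).1)
    have hHs : ∏ p ∈ P with p ∣ a k, (1 + f p) = H ^ s := by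
      rw [hH, ← Real.finsetProd_rpow]
      · apply Finset.prod_congr rfl
        intro p _
        simp only [hf]; ring
      · exact fun p hp =>
          zero_le_one.trans (one_le_inv p (hPm p (Finset.mem_filter.1 hp).1).1)
    have h5 : t < C2 * (c₂ * t) * H * C1 := by
      refine hk3.trans_le ?_
      apply mul_le_mul (mul_le_mul_of_nonneg_right hsm hH0) hlarge
      · apply Finset.prod_nonneg
        intro p hp
        exact zero_le_one.trans (hone p (Finset.mem_filter.1 hp).1)
      · positivity
    have h6 : C2 * (c₂ * t) * H * C1 = t * (H / Real.exp K) := by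
      rw [hc₂]; field_simp
    rw [h6] at h5
    have h7 : 1 < H / Real.exp K := by
      by_contra h
      rw [not_lt] at h
      nlinarith
    rw [one_lt_div (Real.exp_pos _)] at h7
    rw [hHs, Real.exp_mul]
    exact Real.rpow_le_rpow (Real.exp_pos _).le h7.le hs0.le
  have hcount : (B.card : ℝ) * Real.exp (K * s) ≤ γ * N * Real.exp (2 * Real.exp 2 * s * |L|) := by
    calc (B.card : ℝ) * Real.exp (K * s) = ∑ k ∈ B, Real.exp (K * s) := by
          rw [Finset.sum_const, nsmul_eq_mul]
      _ ≤ ∑ k ∈ B, ∏ p ∈ P with p ∣ a k, (1 + f p) := Finset.sum_le_sum hbad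
      _ ≤ ∑ k ∈ Finset.Icc 1 N, ∏ p ∈ P with p ∣ a k, (1 + f p) :=
          Finset.sum_le_sum_of_subset_of_nonneg (Finset.filter_subset _ _) (fun k _ _ => hnn k)
      _ ≤ _ := hmom
      _ ≤ _ := mul_le_mul_of_nonneg_left hprod (by positivity)
  have hfin : (B.card : ℝ) ≤ γ * N * Real.exp (-s) := by
    have h1 : Real.exp (2 * Real.exp 2 * s * |L|) = Real.exp (-s) * Real.exp (K * s) := by
      rw [← Real.exp_add, hK]; ring_nf
    rw [h1, ← mul_assoc] at hcount
    exact le_of_mul_le_mul_right hcount (Real.exp_pos _)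
  calc (B.card : ℝ) ≤ γ * N * Real.exp (-s) := hfin
    _ = γ * Real.exp (-s) * N := by ring
    _ ≤ _ := by
      gcongr
      exact le_max_left _ _
end

section
/- Let f(n) = b_d·n^d + ... + b_0 be a polynomial with integer coefficients such that b_d > 0, gcd(b_d, ..., b_0) = 1, and f(n) is a positive integer for every positive integer n. Then there exists a constant C > 0 depending only on f such that for every real x ≥ 1 and every s ∈ ℕ, Σ_{n ≤ x} (f(n)/φ(f(n)))^s ≤ exp(s·log log(s+2) + C·s) · x, where the sum runs over positive integers n ≤ x. -/
lemma aux_prod_pow_dvd (N : ℕ) :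
    ∏ p ∈ (Finset.range (N+1)).filter Nat.Prime, p ^ (N / p) ∣ Nat.factorial N := by
  apply Finset.prod_dvd_of_isRelPrime
  · intro p hp q hq hpq
    simp only [Finset.coe_filter, Set.mem_ofPred_eq] at hp hq
    exact Nat.coprime_iff_isRelPrime.mp
      (Nat.Coprime.pow _ _ ((Nat.coprime_primes hp.2 hq.2).mpr hpq))
  · intro p hp
    have h1 : p ^ (N / p) ∣ (p * (N / p)).factorial := by
      generalize N / p = k
      have hp' : 0 < p := by
        simp only [Finset.mem_filter] at hp
        exact hp.2.pos
      induction k with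
      | zero => simp
      | succ k ih =>
        rw [pow_succ]
        have : p * (k+1) = (p * k + (p - 1)) + 1 := by
          rw [mul_add]; omega
        rw [this, Nat.factorial_succ, mul_comm]
        apply mul_dvd_mul
        · rw [← this]; exact Dvd.intro _ rfl
        · exact ih.trans (Nat.factorial_dvd_factorial (by omega))
    exact h1.trans (Nat.factorial_dvd_factorial (Nat.mul_div_le N p))

lemma aux_sum_log_div (N : ℕ) (hN : 1 ≤ N) :
    ∑ p ∈ (Finset.range (N+1)).filter Nat.Prime, Real.log p / p ≤ Real.log N + Real.log 4 := by
  have hN' : (0:ℝ) < N := by exact_mod_cast hN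
  have h1 : ((∏ p ∈ (Finset.range (N+1)).filter Nat.Prime, p ^ (N / p) : ℕ) : ℝ) ≤ (N:ℝ)^N := by
    have := (Nat.le_of_dvd (Nat.factorial_pos N) (aux_prod_pow_dvd N)).trans (Nat.factorial_le_pow N)
    exact_mod_cast this
  have hpos : ∀ p ∈ (Finset.range (N+1)).filter Nat.Prime, (0:ℝ) < p := by
    intro p hp
    simp only [Finset.mem_filter] at hp
    exact_mod_cast hp.2.pos
  have h2 : ∑ p ∈ (Finset.range (N+1)).filter Nat.Prime, ((N / p : ℕ) : ℝ) * Real.log p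
      ≤ N * Real.log N := by
    push_cast at h1
    have h3 := Real.log_le_log (Finset.prod_pos (fun p hp => pow_pos (hpos p hp) _)) h1
    rw [Real.log_prod (fun p hp => (pow_pos (hpos p hp) _).ne')] at h3
    simpa [Real.log_pow] using h3
  have h4 : ∑ p ∈ (Finset.range (N+1)).filter Nat.Prime, Real.log p ≤ N * Real.log 4 := by
    have h5 : ((primorial N : ℕ) : ℝ) ≤ (4:ℝ)^N := by exact_mod_cast primorial_le_four_pow N
    have h6 := Real.log_le_log (by exact_mod_cast primorial_pos N) h5
    unfold primorial at h6
    push_cast at h6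
    rw [Real.log_prod (fun p hp => (hpos p hp).ne'), Real.log_pow] at h6
    exact h6
  have h7 : N * ∑ p ∈ (Finset.range (N+1)).filter Nat.Prime, Real.log p / p ≤
      ∑ p ∈ (Finset.range (N+1)).filter Nat.Prime, ((N / p : ℕ) : ℝ) * Real.log p
      + ∑ p ∈ (Finset.range (N+1)).filter Nat.Prime, Real.log p := by
    rw [Finset.mul_sum, ← Finset.sum_add_distrib]
    apply Finset.sum_le_sum
    intro p hp
    have hp0 := hpos p hp
    have h8 : (N:ℝ) / p ≤ ((N / p : ℕ) : ℝ) + 1 := by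
      rw [div_le_iff₀ hp0]
      have : N < (N / p + 1) * p := by
        have := Nat.lt_div_mul_add (a := N) (b := p) (by exact_mod_cast hp0)
        linarith
      exact_mod_cast this.le
    have h9 : 0 ≤ Real.log p := Real.log_natCast_nonneg p
    calc (N:ℝ) * (Real.log p / p) = (N / p) * Real.log p := by ring
      _ ≤ (((N / p : ℕ) : ℝ) + 1) * Real.log p := by gcongr
      _ = _ := by ring
  have : N * ∑ p ∈ (Finset.range (N+1)).filter Nat.Prime, Real.log p / p
    ≤ N * (Real.log N + Real.log 4) := by linarith
  exact le_of_mul_le_mul_left this hN'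

lemma aux_mertens_ind (N : ℕ) (hN : 2 ≤ N) :
    ∑ p ∈ (Finset.range (N+1)).filter Nat.Prime, (1:ℝ) / p
      - (∑ p ∈ (Finset.range (N+1)).filter Nat.Prime, Real.log p / p) / Real.log N
      + Real.log 4 / Real.log N - Real.log (Real.log N) ≤
    Real.log 4 / Real.log 2 - Real.log (Real.log 2) := by
  have h2 : 0 < Real.log 2 := Real.log_pos (by norm_num)
  induction N, hN using Nat.le_induction with
  | base =>
    have : (Finset.range (2+1)).filter Nat.Prime = {2} := by decide
    rw [this]
    simp
    field_simp
    simp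
  | succ N hN ih =>
    refine le_trans ?_ ih
    have hL : 0 < Real.log N := Real.log_pos (by exact_mod_cast hN)
    have hLL : Real.log N ≤ Real.log ((N+1 : ℕ):ℝ) :=
      Real.log_le_log (by positivity) (by push_cast; linarith)
    have hA := aux_sum_log_div N (by omega)
    rw [Finset.range_add_one (n := N+1), Finset.filter_insert]
    set A := ∑ p ∈ (Finset.range (N+1)).filter Nat.Prime, Real.log p / p
    set B := ∑ p ∈ (Finset.range (N+1)).filter Nat.Prime, (1:ℝ) / p
    set L := Real.log N
    set L' := Real.log ((N+1 : ℕ):ℝ) with hL'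
    have hL0 : 0 < L' := hL.trans_le hLL
    have hlog : 1 - L / L' ≤ Real.log L' - Real.log L := by
      rw [← Real.log_div hL0.ne' hL.ne']
      have := Real.one_sub_inv_le_log_of_pos (div_pos hL0 hL)
      rwa [inv_div] at this
    have hw : 1 / L' ≤ 1 / L := one_div_le_one_div_of_le hL hLL
    have key : A * (1/L - 1/L') ≤ (L + Real.log 4) * (1/L - 1/L') :=
      mul_le_mul_of_nonneg_right hA (by linarith)
    have e : L * (1/L) = 1 := by field_simp
    have e2 : (L + Real.log 4) * (1/L - 1/L') = 1 - L/L' + Real.log 4 / L - Real.log 4 / L' := by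
      field_simp
      ring
    have e3 : A * (1/L - 1/L') = A / L - A / L' := by ring
    split_ifs with hpr
    · rw [Finset.sum_insert (by simp), Finset.sum_insert (by simp)]
      have e4 : (L' / ((N+1:ℕ):ℝ) + A) / L' = 1 / ((N+1:ℕ):ℝ) + A / L' := by
        field_simp
      change 1 / ((N+1:ℕ):ℝ) + B - (L' / ((N+1:ℕ):ℝ) + A) / L' + _ - _ ≤ _
      rw [e4]
      linarith
    · change B - A / L' + _ - _ ≤ _
      linarith

lemma aux_mertens_s3 : ∃ C : ℝ, 0 < C ∧ ∀ s : ℕ, 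
    ∑ p ∈ (Finset.range (s+1)).filter Nat.Prime, (1:ℝ) / p ≤ Real.log (Real.log (s+2)) + C := by
  have h2 : 0 < Real.log 2 := Real.log_pos (by norm_num)
  have h4 : 0 < Real.log 4 := Real.log_pos (by norm_num)
  refine ⟨|1 + Real.log 4 / Real.log 2 - Real.log (Real.log 2)| + 1, by positivity, fun s => ?_⟩
  have h := aux_mertens_ind (s+2) (by omega)
  have hA := aux_sum_log_div (s+2) (by omega)
  have hL : 0 < Real.log ((s+2 : ℕ):ℝ) := Real.log_pos (by push_cast; linarith [(s.cast_nonneg : (0:ℝ) ≤ s)])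
  have hmono : ∑ p ∈ (Finset.range (s+1)).filter Nat.Prime, (1:ℝ) / p ≤
      ∑ p ∈ (Finset.range (s+2+1)).filter Nat.Prime, (1:ℝ) / p := by
    apply Finset.sum_le_sum_of_subset_of_nonneg
    · apply Finset.filter_subset_filter
      intro a; simp; omega
    · intros; positivity
  have hd := div_le_div_of_nonneg_right hA hL.le
  rw [add_div, div_self hL.ne'] at hd
  have := le_abs_self (1 + Real.log 4 / Real.log 2 - Real.log (Real.log 2))
  push_cast at *
  linarith

lemma aux_telescope_s3 (S : Finset ℕ) (hS : ∀ p ∈ S, 2 ≤ p) :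
    ∑ p ∈ S, (1:ℝ) / (p * (p - 1)) ≤ 1 := by
  have h : ∀ N : ℕ, ∑ k ∈ Finset.range N, (1:ℝ) / (((k+2:ℕ):ℝ) * (((k+2:ℕ):ℝ) - 1)) = 1 - 1 / (N+1) := by
    intro N
    induction N with
    | zero => simp
    | succ N ih =>
      rw [Finset.sum_range_succ, ih]
      push_cast
      have : (N:ℝ) + 2 - 1 ≠ 0 := by
        have : (0:ℝ) ≤ N := N.cast_nonneg
        linarith
      have h3 : (N:ℝ) + 1 + 1 ≠ 0 := by positivity
      field_simp
      ring
  obtain ⟨N, hN⟩ := S.exists_nat_subset_range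
  have hsub : S ⊆ (Finset.range N).image (fun k => k + 2) := by
    intro p hp
    have := hS p hp
    have h2 := Finset.mem_range.mp (hN hp)
    exact Finset.mem_image.mpr ⟨p - 2, by simp; omega, by omega⟩
  calc ∑ p ∈ S, (1:ℝ) / (p * (p - 1)) ≤ ∑ p ∈ (Finset.range N).image (fun k : ℕ => (k + 2 : ℕ)), (1:ℝ) / ((p:ℕ) * (p - 1)) := by
        apply Finset.sum_le_sum_of_subset_of_nonneg hsub
        intro p hp _
        obtain ⟨k, _, rfl⟩ := Finset.mem_image.mp hp
        push_cast
        have : (0:ℝ) ≤ k := k.cast_nonneg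
        have : (0:ℝ) ≤ (k:ℝ) + 2 - 1 := by linarith
        positivity
    _ = 1 - 1 / (N+1) := by
        rw [Finset.sum_image (by intro a _ b _ h; simpa using h), ← h]
    _ ≤ 1 := by
        have : (0:ℝ) ≤ 1 / ((N:ℝ)+1) := by positivity
        linarith

lemma aux_rho_le (f : Polynomial ℤ) (hcont : f.content = 1) (p : ℕ) (hp : p.Prime) :
    ((Finset.range p).filter (fun r : ℕ => (p:ℤ) ∣ f.eval (r:ℤ))).card ≤ f.natDegree := by
  have : Fact p.Prime := ⟨hp⟩
  set g := f.map (Int.castRingHom (ZMod p)) with hg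
  have hg0 : g ≠ 0 := by
    intro h0
    have : (p:ℤ) ∣ f.content := by
      rw [Polynomial.dvd_content_iff_C_dvd, Polynomial.C_dvd_iff_dvd_coeff]
      intro i
      have h1 : g.coeff i = 0 := by rw [h0]; simp
      rw [hg, Polynomial.coeff_map] at h1
      exact (ZMod.intCast_zmod_eq_zero_iff_dvd _ p).mp (by simpa using h1)
    rw [hcont] at this
    have h2 := Int.eq_one_of_dvd_one (by positivity) this
    exact hp.one_lt.ne' (by exact_mod_cast h2)
  calc _ ≤ g.roots.toFinset.card := by
        apply Finset.card_le_card_of_injOn (fun r : ℕ => (r : ZMod p))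
        · intro r hr
          simp only [Finset.coe_filter, Set.mem_ofPred_eq] at hr
          simp only [Multiset.mem_toFinset, Finset.mem_coe]
          rw [Polynomial.mem_roots hg0, Polynomial.IsRoot, hg]
          have h3 := (ZMod.intCast_zmod_eq_zero_iff_dvd _ p).mpr hr.2
          have h4 := Polynomial.eval_intCast_map (Int.castRingHom (ZMod p)) f (r:ℤ)
          rw [Int.cast_natCast, eq_intCast, Int.cast_id, h3] at h4
          exact h4
        · intro a ha b hb hab
          simp only [Finset.coe_filter, Set.mem_ofPred_eq, Finset.mem_range] at ha hb
          have := (ZMod.natCast_eq_natCast_iff' a b p).mp hab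
          rwa [Nat.mod_eq_of_lt ha.1, Nat.mod_eq_of_lt hb.1] at this
    _ ≤ Multiset.card g.roots := Multiset.toFinset_card_le _
    _ ≤ g.natDegree := Polynomial.card_roots' g
    _ ≤ f.natDegree := Polynomial.natDegree_map_le

lemma aux_count_s3 (f : Polynomial ℤ) (T : Finset ℕ) (hT : ∀ p ∈ T, p.Prime) (N : ℕ) :
    ((Finset.Icc 1 N).filter (fun n : ℕ => ∀ p ∈ T, (p:ℤ) ∣ f.eval (n:ℤ))).card ≤
    (N / (∏ p ∈ T, p) + 1) *
      ∏ p ∈ T, ((Finset.range p).filter (fun r : ℕ => (p:ℤ) ∣ f.eval (r:ℤ))).card := by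
  set D := ∏ p ∈ T, p with hD
  rw [← Finset.card_pi, ← Finset.card_range (N / D + 1), ← Finset.card_product]
  apply Finset.card_le_card_of_injOn (fun n : ℕ => (n / D, fun p (_ : p ∈ T) => n % p))
  · intro n hn
    simp only [Finset.coe_filter, Set.mem_ofPred_eq, Finset.mem_Icc] at hn
    simp only [Finset.mem_coe, Finset.mem_product, Finset.mem_range, Finset.mem_pi, Finset.mem_filter]
    refine ⟨Nat.lt_succ_of_le (Nat.div_le_div_right hn.1.2), fun p hp => ⟨Nat.mod_lt _ (hT p hp).pos, ?_⟩⟩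
    have h1 : ((n:ℤ) - ((n % p : ℕ) : ℤ)) ∣ f.eval (n:ℤ) - f.eval ((n % p : ℕ) : ℤ) :=
      Polynomial.sub_dvd_eval_sub _ _ f
    have h2 : (p:ℤ) ∣ (n:ℤ) - ((n % p : ℕ) : ℤ) := by
      push_cast
      exact Int.dvd_self_sub_emod
    have h3 := h2.trans h1
    exact (dvd_sub_right (hn.2 p hp)).mp h3
  · intro a ha b hb hab
    simp only [Prod.mk.injEq] at hab
    obtain ⟨h1, h2⟩ := hab
    have h3 : ∀ p ∈ T, a % p = b % p := fun p hp => congrFun (congrFun h2 p) hp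
    have h4 : (D:ℤ) ∣ (a:ℤ) - b := by
      rw [hD, Nat.cast_prod]
      apply Finset.prod_dvd_of_coprime
      · intro p hp q hq hpq
        exact Nat.isCoprime_iff_coprime.mpr ((Nat.coprime_primes (hT p hp) (hT q hq)).mpr hpq)
      · intro p hp
        exact (Nat.modEq_iff_dvd.mp (h3 p hp).symm)
    have h5 : a % D = b % D := (Nat.modEq_iff_dvd.mpr h4).symm
    rw [← Nat.div_add_mod a D, ← Nat.div_add_mod b D, h1, h5]

lemma aux_totient_ratio (m : ℕ) (hm : 0 < m) :
    (m:ℝ) / (Nat.totient m : ℝ) = ∏ p ∈ m.primeFactors, (1 + 1 / ((p:ℝ) - 1)) := by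
  have h := Nat.totient_mul_prod_primeFactors m
  have ht : (0:ℝ) < Nat.totient m := by exact_mod_cast Nat.totient_pos.mpr hm
  have h' : (Nat.totient m : ℝ) * ∏ p ∈ m.primeFactors, (p:ℝ) = m * ∏ p ∈ m.primeFactors, ((p:ℝ) - 1) := by
    have h1 : ∏ p ∈ m.primeFactors, ((p:ℝ) - 1) = ((∏ p ∈ m.primeFactors, (p - 1) : ℕ) : ℝ) := by
      push_cast
      apply Finset.prod_congr rfl
      intro p hp
      rw [Nat.cast_sub (Nat.prime_of_mem_primeFactors hp).one_le]; simp
    rw [h1]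
    rw [← Nat.cast_prod, ← Nat.cast_mul, h, Nat.cast_mul]
  have hp1 : ∀ p ∈ m.primeFactors, (0:ℝ) < (p:ℝ) - 1 := by
    intro p hp
    have : (1:ℝ) < p := by exact_mod_cast (Nat.prime_of_mem_primeFactors hp).one_lt
    linarith
  have h2 : ∏ p ∈ m.primeFactors, (1 + 1 / ((p:ℝ) - 1)) =
      (∏ p ∈ m.primeFactors, (p:ℝ)) / ∏ p ∈ m.primeFactors, ((p:ℝ) - 1) := by
    rw [← Finset.prod_div_distrib]
    apply Finset.prod_congr rfl
    intro p hp
    have := hp1 p hp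
    field_simp
    ring
  rw [h2, div_eq_div_iff ht.ne' (Finset.prod_pos hp1).ne', ← h']
  ring

lemma aux_poly_bound (f : Polynomial ℤ) : ∃ B : ℝ, 1 ≤ B ∧ ∀ n : ℕ, 0 < n →
    ((f.eval (n:ℤ) : ℤ) : ℝ) ≤ B * (n:ℝ) ^ f.natDegree := by
  refine ⟨1 + ∑ i ∈ Finset.range (f.natDegree + 1), |(f.coeff i : ℝ)|, ?_, ?_⟩
  · have : 0 ≤ ∑ i ∈ Finset.range (f.natDegree + 1), |(f.coeff i : ℝ)| :=
      Finset.sum_nonneg (fun _ _ => abs_nonneg _)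
    linarith
  · intro n hn
    have hn1 : (1:ℝ) ≤ n := by exact_mod_cast hn
    rw [Polynomial.eval_eq_sum_range]
    push_cast
    rw [add_mul, Finset.sum_mul]
    have : ∑ i ∈ Finset.range (f.natDegree + 1), (f.coeff i : ℝ) * (n:ℝ) ^ i ≤
        ∑ i ∈ Finset.range (f.natDegree + 1), |(f.coeff i : ℝ)| * (n:ℝ) ^ f.natDegree := by
      apply Finset.sum_le_sum
      intro i hi
      have : i ≤ f.natDegree := by simp at hi; omega
      gcongr
      exact le_abs_self _
    have h2 : (0:ℝ) ≤ 1 * (n:ℝ) ^ f.natDegree := by positivity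
    linarith

lemma aux_pointwise (f : Polynomial ℤ)
    (hpos : ∀ n : ℕ, 0 < n → 0 < f.eval (n : ℤ)) :
    ∃ C : ℝ, 0 < C ∧ ∀ x : ℝ, 1 ≤ x → ∀ n ∈ Finset.Icc 1 ⌊x⌋₊,
      ((f.eval (n : ℤ)).toNat : ℝ) / (Nat.totient (f.eval (n : ℤ)).toNat : ℝ) ≤
      Real.exp (C + ∑ p ∈ ((Finset.range (⌊Real.log x / Real.log 4⌋₊ + 1)).filter Nat.Prime).filter
        (fun p : ℕ => (p:ℤ) ∣ f.eval (n:ℤ)), (1:ℝ) / p) := by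
  obtain ⟨B, hB1, hB⟩ := aux_poly_bound f
  have h2 : 0 < Real.log 2 := Real.log_pos (by norm_num)
  have h4 : 0 < Real.log 4 := Real.log_pos (by norm_num)
  have hlB : 0 ≤ Real.log B := Real.log_nonneg hB1
  refine ⟨1 + (Real.log B + f.natDegree * Real.log 4) / Real.log 2, by positivity, ?_⟩
  intro x hx n hn
  obtain ⟨hn1, hn2⟩ := Finset.mem_Icc.mp hn
  have hnx : (n:ℝ) ≤ x := (Nat.le_floor_iff (by linarith)).mp hn2
  have hm := hpos n hn1
  have hmb := hB n hn1
  obtain ⟨m, hmm⟩ := Int.eq_ofNat_of_zero_le hm.le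
  rw [hmm] at hm hmb ⊢
  simp only [Int.toNat_natCast, Int.cast_natCast] at hm hmb ⊢
  have hm0 : 0 < m := by exact_mod_cast hm
  set Y := ⌊Real.log x / Real.log 4⌋₊ with hY
  rw [aux_totient_ratio m hm0]
  have hprime : ∀ p ∈ m.primeFactors, p.Prime := fun p hp => Nat.prime_of_mem_primeFactors hp
  have step1 : ∏ p ∈ m.primeFactors, (1 + 1 / ((p:ℝ) - 1)) ≤
      Real.exp (∑ p ∈ m.primeFactors, 1 / ((p:ℝ) - 1)) := by
    rw [Real.exp_sum]
    apply Finset.prod_le_prod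
    · intro p hp
      have : (1:ℝ) < p := by exact_mod_cast (hprime p hp).one_lt
      have : (0:ℝ) < (p:ℝ) - 1 := by linarith
      positivity
    · intro p hp
      rw [add_comm]
      exact Real.add_one_le_exp _
  refine step1.trans (Real.exp_le_exp.mpr ?_)
  have step2 : ∑ p ∈ m.primeFactors, 1 / ((p:ℝ) - 1) =
      ∑ p ∈ m.primeFactors, (1:ℝ) / (p * (p - 1)) + ∑ p ∈ m.primeFactors, (1:ℝ) / p := by
    rw [← Finset.sum_add_distrib]
    apply Finset.sum_congr rfl
    intro p hp
    have : (1:ℝ) < p := by exact_mod_cast (hprime p hp).one_lt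
    have h3 : (0:ℝ) < (p:ℝ) - 1 := by linarith
    field_simp
    ring
  have step3 := aux_telescope_s3 m.primeFactors (fun p hp => (hprime p hp).two_le)
  have step4 := Finset.sum_filter_add_sum_filter_not m.primeFactors (fun p => p ≤ Y) (fun p => (1:ℝ)/p)
  have step5 : ∑ p ∈ m.primeFactors.filter (fun p => p ≤ Y), (1:ℝ)/p ≤
      ∑ p ∈ ((Finset.range (Y + 1)).filter Nat.Prime).filter
        (fun p : ℕ => (p:ℤ) ∣ (m:ℤ)), (1:ℝ) / p := by
    apply Finset.sum_le_sum_of_subset_of_nonneg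
    · intro p hp
      simp only [Finset.mem_filter, Nat.mem_primeFactors, Finset.mem_range] at hp ⊢
      exact ⟨⟨by omega, hp.1.1⟩, by exact_mod_cast hp.1.2.1⟩
    · intros; positivity
  have hcard : (m.primeFactors.card : ℝ) * Real.log 2 ≤ (Real.log B + f.natDegree * Real.log 4) * (Y + 1) := by
    have c1 : 2 ^ m.primeFactors.card ≤ m := by
      calc 2 ^ m.primeFactors.card ≤ ∏ p ∈ m.primeFactors, p :=
            Finset.pow_card_le_prod _ _ _ (fun p hp => (hprime p hp).two_le)
        _ ≤ m := Nat.le_of_dvd hm0 (Nat.prod_primeFactors_dvd m)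
    have c2 : (2:ℝ) ^ m.primeFactors.card ≤ B * x ^ f.natDegree := by
      calc (2:ℝ) ^ m.primeFactors.card ≤ m := by exact_mod_cast c1
        _ ≤ B * (n:ℝ) ^ f.natDegree := hmb
        _ ≤ B * x ^ f.natDegree := by gcongr
    have c3 := Real.log_le_log (by positivity) c2
    rw [Real.log_pow, Real.log_mul (by positivity) (by positivity), Real.log_pow] at c3
    have c4 : Real.log x ≤ Real.log 4 * (Y + 1) := by
      have := (Nat.lt_floor_add_one (Real.log x / Real.log 4)).le
      rw [div_le_iff₀ h4] at this
      linarith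
    have c5 : (f.natDegree : ℝ) * Real.log x ≤ f.natDegree * (Real.log 4 * (Y + 1)) := by gcongr
    have c6 : 0 ≤ Real.log B * Y := by positivity
    nlinarith
  have step6 : ∑ p ∈ m.primeFactors.filter (fun p => ¬ p ≤ Y), (1:ℝ)/p ≤
      (Real.log B + f.natDegree * Real.log 4) / Real.log 2 := by
    calc ∑ p ∈ m.primeFactors.filter (fun p => ¬ p ≤ Y), (1:ℝ)/p ≤
        ∑ p ∈ m.primeFactors.filter (fun p => ¬ p ≤ Y), (1:ℝ)/(Y+1) := by
          apply Finset.sum_le_sum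
          intro p hp
          simp only [Finset.mem_filter] at hp
          apply one_div_le_one_div_of_le (by positivity)
          have : Y + 1 ≤ p := by omega
          exact_mod_cast this
      _ = (m.primeFactors.filter (fun p => ¬ p ≤ Y)).card * ((1:ℝ)/(Y+1)) := by
          rw [Finset.sum_const, nsmul_eq_mul]
      _ ≤ m.primeFactors.card * ((1:ℝ)/(Y+1)) := by
          gcongr
          exact Finset.filter_subset _ _
      _ ≤ _ := by
          rw [le_div_iff₀ h2, mul_one_div, div_mul_eq_mul_div, div_le_iff₀ (by positivity)]
          exact hcard
  linarith

lemma aux_factor_s3 (p s d ρ : ℕ) (hp : 2 ≤ p) (hρp : ρ ≤ p) (hρd : ρ ≤ d) :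
    1 + (Real.exp (s / p) - 1) * (ρ / p) ≤
      Real.exp ((if p ≤ s then (s:ℝ) / p else 0) + 2 * d * s * (1 / (p * (p - 1)))) := by
  have hp0 : (0:ℝ) < p := by positivity
  have hp2 : (2:ℝ) ≤ p := by exact_mod_cast hp
  have hp1 : (0:ℝ) < (p:ℝ) - 1 := by linarith
  have hR : (ρ:ℝ) ≤ p := by exact_mod_cast hρp
  have hd : (ρ:ℝ) ≤ d := by exact_mod_cast hρd
  have hg : 0 ≤ Real.exp (s / p) - 1 := by
    have := Real.one_le_exp (x := (s:ℝ)/p) (by positivity)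
    linarith
  have hnn : 0 ≤ 2 * (d:ℝ) * s * (1 / (p * (p - 1))) := by positivity
  split_ifs with h
  · calc 1 + (Real.exp (s / p) - 1) * (ρ / p) ≤ 1 + (Real.exp (s / p) - 1) * 1 := by
          gcongr
          rw [div_le_one hp0]; exact hR
      _ = Real.exp (s/p) := by ring
      _ ≤ _ := Real.exp_le_exp.mpr (by linarith)
  · have hu : (s:ℝ)/p ≤ 1 := by
      rw [div_le_one hp0]
      exact_mod_cast (not_le.mp h).le
    have hu0 : 0 ≤ (s:ℝ)/p := by positivity
    have hexp : Real.exp (s / p) - 1 ≤ 2 * (s / p) := by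
      have := Real.abs_exp_sub_one_le (x := (s:ℝ)/p) (by rw [abs_of_nonneg hu0]; exact hu)
      rw [abs_of_nonneg hg, abs_of_nonneg hu0] at this
      exact this
    calc 1 + (Real.exp (s / p) - 1) * (ρ / p) ≤ 1 + (2 * (s/p)) * (d / p) := by gcongr
      _ = 2 * d * s * (1 / (p * p)) + 1 := by field_simp; ring
      _ ≤ 2 * d * s * (1 / (p * (p-1))) + 1 := by
          gcongr
          linarith
      _ ≤ _ := by
          rw [zero_add]
          exact Real.add_one_le_exp _

set_option maxHeartbeats 400000 in
lemma aux_moment (f : Polynomial ℤ) (hcont : f.content = 1) (x : ℝ) (hx : 1 ≤ x) (s Y : ℕ)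
    (hY : (primorial Y : ℝ) ≤ x) :
    ∑ n ∈ Finset.Icc 1 ⌊x⌋₊, Real.exp (s * ∑ p ∈ ((Finset.range (Y + 1)).filter Nat.Prime).filter
        (fun p : ℕ => (p:ℤ) ∣ f.eval (n:ℤ)), (1:ℝ) / p) ≤
    2 * x * Real.exp (s * ∑ p ∈ (Finset.range (s+1)).filter Nat.Prime, (1:ℝ) / p
      + 2 * f.natDegree * s) := by
  set P := (Finset.range (Y + 1)).filter Nat.Prime with hP
  have hPp : ∀ p ∈ P, p.Prime := fun p hp => (Finset.mem_filter.mp hp).2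
  set ρ : ℕ → ℕ := fun p => ((Finset.range p).filter (fun r : ℕ => (p:ℤ) ∣ f.eval (r:ℤ))).card with hρ
  set g : ℕ → ℝ := fun p => Real.exp (s / p) - 1 with hg
  have hg0 : ∀ p, 0 ≤ g p := by
    intro p
    have := Real.one_le_exp (x := (s:ℝ)/p) (by positivity)
    simp only [hg]
    linarith
  have e1 : ∀ n : ℕ, Real.exp (s * ∑ p ∈ P.filter (fun p : ℕ => (p:ℤ) ∣ f.eval (n:ℤ)), (1:ℝ) / p) =
      ∑ T ∈ P.powerset, if ∀ p ∈ T, (p:ℤ) ∣ f.eval (n:ℤ) then ∏ p ∈ T, g p else 0 := by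
    intro n
    rw [Finset.mul_sum, Real.exp_sum, Finset.prod_filter]
    calc _ = ∏ p ∈ P, (1 + if (p:ℤ) ∣ f.eval (n:ℤ) then g p else 0) := by
          apply Finset.prod_congr rfl
          intro p hp
          split_ifs
          · simp only [hg]; rw [mul_one_div]; ring
          · simp
      _ = _ := by
          rw [Finset.prod_one_add]
          apply Finset.sum_congr rfl
          intro T hT
          rw [Finset.prod_ite_zero]
  simp_rw [e1]
  rw [Finset.sum_comm]
  have e2 : ∀ T ∈ P.powerset, ∑ n ∈ Finset.Icc 1 ⌊x⌋₊,
      (if ∀ p ∈ T, (p:ℤ) ∣ f.eval ((n:ℕ):ℤ) then ∏ p ∈ T, g p else 0) ≤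
      2 * x * ∏ p ∈ T, (g p * (ρ p / p)) := by
    intro T hT
    have hTP := Finset.mem_powerset.mp hT
    have hTp : ∀ p ∈ T, p.Prime := fun p hp => hPp p (hTP hp)
    rw [← Finset.sum_filter, Finset.sum_const, nsmul_eq_mul]
    have hc := aux_count_s3 f T hTp ⌊x⌋₊
    set D := ∏ p ∈ T, p with hD
    have hD0 : 0 < D := Finset.prod_pos (fun p hp => (hTp p hp).pos)
    have hD0' : (0:ℝ) < D := by exact_mod_cast hD0
    have hDx : (D:ℝ) ≤ x := by
      refine le_trans ?_ hY
      have : D ≤ primorial Y := Nat.le_of_dvd (primorial_pos Y) (Finset.prod_dvd_prod_of_subset _ _ _ hTP)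
      exact_mod_cast this
    have hq : ((⌊x⌋₊ / D : ℕ) : ℝ) + 1 ≤ 2 * x / D := by
      have q1 : ((⌊x⌋₊ / D : ℕ) : ℝ) ≤ (⌊x⌋₊ : ℝ) / D := Nat.cast_div_le
      have q2 : (⌊x⌋₊ : ℝ) / D ≤ x / D := by
        gcongr
        exact Nat.floor_le (by linarith)
      have q3 : 1 ≤ x / D := by rwa [one_le_div hD0']
      have : 2 * x / D = x / D + x / D := by ring
      linarith
    have hgp : 0 ≤ ∏ p ∈ T, g p := Finset.prod_nonneg (fun p _ => hg0 p)
    calc _ ≤ (((⌊x⌋₊ / D + 1) * ∏ p ∈ T, ρ p : ℕ) : ℝ) * ∏ p ∈ T, g p := by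
          gcongr
      _ = (((⌊x⌋₊ / D : ℕ) : ℝ) + 1) * (∏ p ∈ T, (ρ p : ℝ)) * ∏ p ∈ T, g p := by
          push_cast; ring
      _ ≤ (2 * x / D) * (∏ p ∈ T, (ρ p : ℝ)) * ∏ p ∈ T, g p := by
          have hr0 : 0 ≤ ∏ p ∈ T, (ρ p : ℝ) := Finset.prod_nonneg (fun p _ => Nat.cast_nonneg _)
          exact mul_le_mul_of_nonneg_right (mul_le_mul_of_nonneg_right hq hr0) hgp
      _ = _ := by
          rw [Finset.prod_mul_distrib, Finset.prod_div_distrib, hD, Nat.cast_prod]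
          ring
  refine (Finset.sum_le_sum e2).trans ?_
  rw [← Finset.mul_sum, ← Finset.prod_one_add]
  gcongr
  calc ∏ p ∈ P, (1 + g p * (ρ p / p)) ≤
      ∏ p ∈ P, Real.exp ((if p ≤ s then (s:ℝ) / p else 0) + 2 * f.natDegree * s * (1 / (p * (p - 1)))) := by
        apply Finset.prod_le_prod
        · intro p hp
          have := hg0 p
          positivity
        · intro p hp
          apply aux_factor_s3 p s f.natDegree (ρ p) (hPp p hp).two_le
          · exact (Finset.card_filter_le _ _).trans (by simp)
          · exact aux_rho_le f hcont p (hPp p hp)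
    _ = Real.exp (∑ p ∈ P, (if p ≤ s then (s:ℝ) / p else 0) + 2 * f.natDegree * s * ∑ p ∈ P, (1:ℝ) / (p * (p - 1))) := by
        rw [← Real.exp_sum, Finset.sum_add_distrib, Finset.mul_sum]
    _ ≤ _ := by
        apply Real.exp_le_exp.mpr
        apply add_le_add
        · rw [← Finset.sum_filter, Finset.mul_sum]
          calc _ ≤ ∑ p ∈ (Finset.range (s+1)).filter Nat.Prime, (s:ℝ)/p := by
                apply Finset.sum_le_sum_of_subset_of_nonneg
                · intro p hp
                  simp only [Finset.mem_filter, hP, Finset.mem_range] at hp ⊢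
                  exact ⟨by omega, hp.1.2⟩
                · intros; positivity
            _ = _ := by
                apply Finset.sum_congr rfl
                intros
                ring
        · have := aux_telescope_s3 P (fun p hp => (hPp p hp).two_le)
          have h0 : (0:ℝ) ≤ 2 * f.natDegree * s := by positivity
          nlinarith

/-- Theorem (Radomskii, Theorem 3, inequality (1)): for a primitive polynomial `f` with
positive leading coefficient mapping positive integers to positive integers,
`∑_{n ≤ x} (f(n)/φ(f(n)))^s ≤ exp(s log log(s+2) + Cs) x`. -/
theorem sum_totient_ratio_polynomial_pow_le (f : Polynomial ℤ)
    (hlead : 0 < f.leadingCoeff) (hcont : f.content = 1)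
    (hpos : ∀ n : ℕ, 0 < n → 0 < f.eval (n : ℤ)) :
    ∃ C : ℝ, 0 < C ∧ ∀ x : ℝ, 1 ≤ x → ∀ s : ℕ, 0 < s →
      ∑ n ∈ Finset.Icc 1 ⌊x⌋₊,
          (((f.eval (n : ℤ)).toNat : ℝ) / (Nat.totient (f.eval (n : ℤ)).toNat : ℝ)) ^ s ≤
        Real.exp (s * Real.log (Real.log (s + 2)) + C * s) * x := by
  obtain ⟨C1, hC1, h1⟩ := aux_pointwise f hpos
  obtain ⟨C2, hC2, h2⟩ := aux_mertens_s3
  refine ⟨1 + C1 + C2 + 2 * f.natDegree, by positivity, ?_⟩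
  intro x hx s hs
  set Y := ⌊Real.log x / Real.log 4⌋₊ with hY
  have h4 : 0 < Real.log 4 := Real.log_pos (by norm_num)
  have hYx : (primorial Y : ℝ) ≤ x := by
    have a1 : (primorial Y : ℝ) ≤ (4:ℝ) ^ Y := by exact_mod_cast primorial_le_four_pow Y
    refine a1.trans ?_
    rw [← Real.log_le_log_iff (by positivity) (by linarith), Real.log_pow, ← le_div_iff₀ h4]
    exact Nat.floor_le (div_nonneg (Real.log_nonneg hx) h4.le)
  have hm := aux_moment f hcont x hx s Y hYx
  have hs1 : (1:ℝ) ≤ s := by exact_mod_cast hs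
  calc _ ≤ ∑ n ∈ Finset.Icc 1 ⌊x⌋₊, Real.exp (s * C1) * Real.exp (s * ∑ p ∈ ((Finset.range (Y + 1)).filter Nat.Prime).filter
        (fun p : ℕ => (p:ℤ) ∣ f.eval (n:ℤ)), (1:ℝ) / p) := by
        apply Finset.sum_le_sum
        intro n hn
        rw [← Real.exp_add, ← mul_add, Real.exp_nat_mul]
        exact pow_le_pow_left₀ (by positivity) (h1 x hx n hn) s
    _ ≤ Real.exp (s * C1) * (2 * x * Real.exp (s * ∑ p ∈ (Finset.range (s+1)).filter Nat.Prime, (1:ℝ) / p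
      + 2 * f.natDegree * s)) := by
        rw [← Finset.mul_sum]
        gcongr
    _ ≤ Real.exp (s * C1) * (Real.exp s * x * Real.exp (s * (Real.log (Real.log (s+2)) + C2)
      + 2 * f.natDegree * s)) := by
        have : (2:ℝ) ≤ Real.exp s := by
          have := Real.add_one_le_exp (s:ℝ)
          linarith
        gcongr
        exact h2 s
    _ = (Real.exp (s * C1) * Real.exp s * Real.exp (s * (Real.log (Real.log (s+2)) + C2)
      + 2 * f.natDegree * s)) * x := by ring
    _ = _ := by
        rw [← Real.exp_add, ← Real.exp_add]
        congr 2
        ring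
end
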